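/- Zariski-locality of hfp: let (A, I) be a Henselian pair and let B be an A-algebra such that (B, I·B) is a Henselian pair. Let f₁, …, fₙ ∈ B be finitely many elements whose images in B/IB generate the unit ideal. For each i, let B_i be a B-algebra equipped with a homomorphism from the localization B_{f_i} exhibiting B_i as a Henselization of the pair (B_{f_i}, I·B_{f_i}). If each B_i, viewed as an A-algebra, is hfp over A with respect to I, then B is hfp over A with respect to I. -/

import Mathlib

universe u

/-- A ring homomorphism `ρ : R →+* H` exhibits `H` as a Henselization of the pair `(R, K)`:
`(H, K·H)` is a Henselian pair, and every map from `(R, K)` to a Henselian pair factors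
uniquely through `ρ`. -/
def IsHenselization {R H : Type u} [CommRing R] [CommRing H]
    (K : Ideal R) (ρ : R →+* H) : Prop :=
  HenselianRing H (K.map ρ) ∧
    ∀ (C : Type u) [CommRing C] (J : Ideal C), HenselianRing C J →
      ∀ f : R →+* C, K.map f ≤ J → ∃! g : H →+* C, g.comp ρ = f

/-- `φ : A →+* B` is Henselian finitely presented (hfp) with respect to `I`:
`B` is a Henselization of `(R, I·R)` for some finitely presented `A`-algebra `R`. -/
def IsHfp {A B : Type u} [CommRing A] [CommRing B] (φ : A →+* B) (I : Ideal A) : Prop :=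
  ∃ (R : Type u) (_ : CommRing R) (ψ : A →+* R) (ρ : R →+* B),
    ψ.FinitePresentation ∧ ρ.comp ψ = φ ∧ IsHenselization (I.map ψ) ρ

/-- `φ : A →+* B` is h-formally étale with respect to `I`. -/
def IsHFormallyEtale {A B : Type u} [CommRing A] [CommRing B] (φ : A →+* B) (I : Ideal A) :
    Prop :=
  ∀ (E C : Type u) [CommRing E] [CommRing C] (e : A →+* E) (c : A →+* C)
    (p : E →+* C) (u : B →+* C),
    p.comp e = c → u.comp φ = c →
    (∃ N : ℕ, 1 ≤ N ∧ Ideal.map e (I ^ N) = ⊥ ∧ Ideal.map c (I ^ N) = ⊥) →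
    Function.Surjective p →
    (∃ M : ℕ, 1 ≤ M ∧ RingHom.ker p ^ M = ⊥) →
    ∃! v : B →+* E, v.comp φ = e ∧ p.comp v = u

/-- `φ : A →+* B` is h-formally smooth with respect to `I`. -/
def IsHFormallySmooth {A B : Type u} [CommRing A] [CommRing B] (φ : A →+* B) (I : Ideal A) :
    Prop :=
  ∀ (E C : Type u) [CommRing E] [CommRing C] (e : A →+* E) (c : A →+* C)
    (p : E →+* C) (u : B →+* C),
    p.comp e = c → u.comp φ = c →
    (∃ N : ℕ, 1 ≤ N ∧ Ideal.map e (I ^ N) = ⊥ ∧ Ideal.map c (I ^ N) = ⊥) →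
    Function.Surjective p →
    (∃ M : ℕ, 1 ≤ M ∧ RingHom.ker p ^ M = ⊥) →
    ∃ v : B →+* E, v.comp φ = e ∧ p.comp v = u

/-- `φ : A →+* B` is h-étale with respect to `I`: `B` is a Henselization of `(R, I·R)`
for some étale `A`-algebra `R`. -/
def IsHEtale {A B : Type u} [CommRing A] [CommRing B] (φ : A →+* B) (I : Ideal A) : Prop :=
  ∃ (R : Type u) (_ : CommRing R) (_ : Algebra A R) (ρ : R →+* B),
    Algebra.Etale A R ∧ ρ.comp (algebraMap A R) = φ ∧
      IsHenselization (I.map (algebraMap A R)) ρ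

/-- `φ : A →+* B` is h-smooth with respect to `I`: `B` is a Henselization of `(R, I·R)`
for some smooth `A`-algebra `R`. -/
def IsHSmooth {A B : Type u} [CommRing A] [CommRing B] (φ : A →+* B) (I : Ideal A) : Prop :=
  ∃ (R : Type u) (_ : CommRing R) (_ : Algebra A R) (ρ : R →+* B),
    Algebra.Smooth A R ∧ ρ.comp (algebraMap A R) = φ ∧
      IsHenselization (I.map (algebraMap A R)) ρ

/-- A ring homomorphism is flat if it makes the target into a flat module over the source. -/
def RingHomFlat {A C : Type u} [CommRing A] [CommRing C] (f : A →+* C) : Prop :=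
  letI := f.toAlgebra
  Module.Flat A C

/-- A ring homomorphism is smooth if it makes the target into a smooth algebra over the
source (smooth = formally smooth + finitely presented). -/
def RingHomSmooth {A C : Type u} [CommRing A] [CommRing C] (f : A →+* C) : Prop :=
  letI := f.toAlgebra
  Algebra.Smooth A C

/-- A ring homomorphism is étale if it makes the target into an étale algebra over the
source (étale = formally étale + finitely presented). -/
def RingHomEtale {A C : Type u} [CommRing A] [CommRing C] (f : A →+* C) : Prop :=
  letI := f.toAlgebra
  Algebra.Etale A C

/-!
Write `B` as the filtered colimit of finitely presented `A`-algebras `X`, chosen so that lifts of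
the `f i` already generate the unit ideal of `X`. Away from `f i` the Henselization of `B` is hfp,
so it is a compact object among Henselian algebras, and Henselization commutes with filtered
colimits. Hence, after enlarging `X`, it maps back to the Henselization of `X` away from the lift of
`f i`, and these maps agree on overlaps.

They glue to a section of `X^h → B`, because Henselizations form a sheaf: over a finite faithfully
flat cover on which the étale charts split, a section is given near `V(I)` by finitely many
quotients `aₖ / wₖ`, which glue since `V(𝔭 + I)` is connected for every prime `𝔭` in an integral
extension of a Henselian pair; the resulting function then descends. So `B` is a retract of the hfp
algebra `X^h`. The kernel of the retraction is finitely generated, and quotients of hfp algebras by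
finitely generated ideals are hfp.
-/

open Polynomial TensorProduct

section Hensel

theorem map_mk_reflect {S : Type u} [CommRing S] (I : Ideal S) {g : S[X]} (h0 : g.coeff 0 = 1)
    (h2 : ∀ k, 2 ≤ k → g.coeff k ∈ I) (N : ℕ) :
    (reflect (N + 1) g).map (Ideal.Quotient.mk I) =
      X ^ N * (X + C (Ideal.Quotient.mk I (g.coeff 1))) := by
  have hg : g.map (Ideal.Quotient.mk I) = C 1 + C (Ideal.Quotient.mk I (g.coeff 1)) * X ^ 1 := by
    ext k
    rcases k with - | - | k
    · simp [h0]
    · simp [coeff_one]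
    · simpa [coeff_one, coeff_X, coeff_C] using Ideal.Quotient.eq_zero_iff_mem.2 (h2 _ (by omega))
  rw [← reflect_map, hg, reflect_add, reflect_C, reflect_C_mul_X_pow, revAt_le (by omega)]
  simp only [map_one, one_mul, Nat.add_sub_cancel]
  ring

variable {S : Type u} [CommRing S] (I : Ideal S) [hS : HenselianRing S I]

theorem isUnit_of_isUnit_mk {w : S} (h : IsUnit (Ideal.Quotient.mk I w)) : IsUnit w :=
  have := isLocalHom_of_le_jacobson_bot I hS.jac
  isUnit_of_map_unit (Ideal.Quotient.mk I) w h

theorem isUnit_of_sub_one_mem {w : S} (h : w - 1 ∈ I) : IsUnit w :=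
  isUnit_of_isUnit_mk I <| by
    rw [Ideal.Quotient.eq.2 h, map_one]
    exact isUnit_one

variable {I}

/-- Non-monic Hensel at infinity: the reflected polynomial is monic and has the simple root
`-g₁` modulo `I`. -/
theorem exists_eval_eq_zero_of_coeff_mem {g : S[X]} (h0 : g.coeff 0 = 1)
    (h1 : IsUnit (g.coeff 1)) (h2 : ∀ k, 2 ≤ k → g.coeff k ∈ I) : ∃ x, g.eval x = 0 := by
  set c := g.coeff 1
  set N := g.natDegree
  have hmonic : (reflect (N + 1) g).Monic := by
    refine monic_of_natDegree_le_of_coeff_eq_one (N + 1)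
      (natDegree_le_iff_coeff_eq_zero.2 fun k hk => ?_)
      (by rw [coeff_reflect, revAt_le le_rfl, Nat.sub_self, h0])
    rw [coeff_reflect, revAt_eq_self_of_lt hk, coeff_eq_zero_of_natDegree_lt (by omega)]
  have hmap := map_mk_reflect I h0 h2 N
  obtain ⟨w, hw, hwc⟩ := hS.is_henselian _ hmonic (-c)
    (by
      rw [← Ideal.Quotient.eq_zero_iff_mem, ← eval_map_apply, hmap]
      simp [c])
    (by
      rw [← eval_map_apply, ← derivative_map, hmap]
      simpa [derivative_mul, c] using (h1.neg.map (Ideal.Quotient.mk I)).pow N)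
  have hu : IsUnit w := by
    refine isUnit_of_isUnit_mk I ?_
    rw [Ideal.Quotient.eq.2 hwc]
    exact h1.neg.map _
  let := hu.invertible
  let : Invertible (⅟w) := invertibleInvOf
  refine ⟨⅟w, ?_⟩
  have := eval₂_reflect_eq_zero_iff (RingHom.id S) (⅟w) (N + 1) g (by omega)
  rw [invOf_invOf] at this
  exact this.1 hw

theorem exists_mem_eval_eq_zero {p : S[X]} (h0 : p.coeff 0 ∈ I) (h1 : IsUnit (p.coeff 1)) :
    ∃ y ∈ I, p.eval y = 0 := by
  set c := p.coeff 0
  obtain ⟨x, hx⟩ := exists_eval_eq_zero_of_coeff_mem (I := I)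
    (g := 1 + C (p.coeff 1) * X + C c * (p.divX.divX.comp (C c * X) * X ^ 2))
    (by simp) (by simpa [coeff_one, coeff_mul_X_pow'] using h1) fun k hk => by
      simpa [coeff_one, coeff_X, show k ≠ 0 by omega, show 1 ≠ k by omega] using
        I.mul_mem_right _ h0
  refine ⟨c * x, I.mul_mem_right _ h0, ?_⟩
  rw [← divX_mul_X_add p, ← divX_mul_X_add p.divX]
  simp only [eval_add, eval_mul, eval_one, eval_C, eval_X, eval_pow, eval_comp, coeff_divX,
    zero_add] at hx ⊢
  linear_combination c * hx

theorem exists_mem_map_eval_add_mul_eq_zero {T : Type*} [CommRing T] (f : S →+* T) {F : S[X]}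
    {a u i j : S} (hi : i ∈ I) (hj : j ∈ I) (hFi : f (F.eval a) = f i)
    (hFj : f (F.derivative.eval a * u) = f (1 + j)) : ∃ y ∈ I, f (F.eval (a + u * y)) = 0 := by
  let G : S[X] :=
    F.comp (C a + C u * X) - C (F.eval a - i) - C (F.derivative.eval a * u - 1 - j) * X
  have hG0 : G.coeff 0 = i := by simp [G, coeff_zero_eq_eval_zero]
  have hG1 : G.coeff 1 = 1 + j := by
    have hcoeff (p : S[X]) : p.coeff 1 = p.derivative.eval 0 := by
      simp [← coeff_zero_eq_eval_zero, coeff_derivative]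
    rw [hcoeff]
    simp [G, derivative_comp]
    ring
  obtain ⟨y, hy, hGy⟩ := exists_mem_eval_eq_zero (p := G) (hG0 ▸ hi)
    (isUnit_of_sub_one_mem I (by rwa [hG1, add_sub_cancel_left]))
  refine ⟨y, hy, ?_⟩
  simp only [G, eval_sub, eval_comp, eval_add, eval_mul, eval_C, eval_X] at hGy
  have hF : F.eval (a + u * y) = F.eval a - i + (F.derivative.eval a * u - (1 + j)) * y := by
    linear_combination hGy
  rw [hF, map_add, map_mul, map_sub, map_sub, hFi, hFj, sub_self, sub_self, zero_mul, add_zero]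

theorem henselianRing_map_of_surjective {T : Type*} [CommRing T] {f : S →+* T}
    (hf : Function.Surjective f) : HenselianRing T (I.map f) where
  jac := by
    rw [Ideal.map_le_iff_le_comap, Ideal.comap_jacobson_of_surjective hf]
    exact hS.jac.trans (Ideal.jacobson_mono bot_le)
  is_henselian p _ a₀ h0 h1 := by
    have hmap {x : T} := Ideal.mem_map_iff_of_surjective f hf (I := I) (y := x)
    obtain ⟨F, rfl⟩ := Polynomial.map_surjective f hf p
    obtain ⟨a, rfl⟩ := hf a₀
    obtain ⟨u, hu⟩ := h1.exists_right_inv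
    obtain ⟨u, rfl⟩ := Ideal.Quotient.mk_surjective u
    obtain ⟨u, rfl⟩ := hf u
    rw [eval_map_apply] at h0
    rw [derivative_map, eval_map_apply, ← map_mul, ← map_mul, ← map_one (Ideal.Quotient.mk _),
      Ideal.Quotient.eq] at hu
    obtain ⟨i, hi, hFi⟩ := hmap.1 h0
    obtain ⟨j, hj, hFj⟩ := hmap.1 hu
    obtain ⟨y, hy, hFy⟩ := exists_mem_map_eval_add_mul_eq_zero f hi hj hFi.symm
      (by rw [map_add, map_one, hFj, add_sub_cancel])
    refine ⟨f (a + u * y), by rwa [IsRoot.def, eval_map_apply], ?_⟩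
    rw [← map_sub, add_sub_cancel_left]
    exact Ideal.mem_map_of_mem _ (I.mul_mem_left u hy)

theorem henselianRing_bot : HenselianRing S (⊥ : Ideal S) where
  jac := bot_le
  is_henselian f _ a₀ h _ := ⟨a₀, by simpa using h, by simp⟩

end Hensel

section EtaleNeighbourhoods

variable {R H Q : Type u} [CommRing R] [CommRing H] [CommRing Q]

/-- `ρ : R →+* H` inverts `g`, and every ring homomorphism from the pair `(R, K)` to a Henselian
pair that inverts `g` factors uniquely through `ρ`. Both étale neighbourhoods of
`V(K) ∩ D(g)` and its Henselization have this property. -/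
def IsHenselEquivAway (K : Ideal R) (g : R) (ρ : R →+* H) : Prop :=
  IsUnit (ρ g) ∧ ∀ (C : Type u) [CommRing C] (J : Ideal C), HenselianRing C J →
    ∀ f : R →+* C, K.map f ≤ J → IsUnit (f g) → ∃! h : H →+* C, h.comp ρ = f

namespace IsHenselEquivAway

theorem comp {K : Ideal R} {g : R} {q : R →+* Q} {ρ : Q →+* H} (hq : IsHenselEquivAway K g q)
    (hρ : IsHenselEquivAway (K.map q) 1 ρ) : IsHenselEquivAway K g (ρ.comp q) := by
  refine ⟨hq.1.map ρ, fun C _ J hJ f hf hg => ?_⟩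
  obtain ⟨a, rfl, ha⟩ := hq.2 C J hJ f hf hg
  obtain ⟨b, rfl, hb⟩ := hρ.2 C J hJ a (by rwa [Ideal.map_map]) (by simp)
  exact ⟨b, rfl, fun y hy => hb _ (ha _ hy)⟩

theorem of_comp_of_dvd {K : Ideal R} {g h : R} {q : R →+* Q} {ρ : Q →+* H}
    (hq : IsHenselEquivAway K g q) (hgh : g ∣ h) (hρ : IsHenselEquivAway K h (ρ.comp q)) :
    IsHenselEquivAway (K.map q) (q h) ρ := by
  refine ⟨hρ.1, fun T _ J hJ f hf hh => ?_⟩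
  rw [Ideal.map_map] at hf
  obtain ⟨b, hb, hb'⟩ := hρ.2 T J hJ (f.comp q) hf hh
  refine ⟨b, (hq.2 T J hJ (f.comp q) hf
    (isUnit_of_dvd_unit (map_dvd (f.comp q) hgh) hh)).unique hb rfl, ?_⟩
  rintro y rfl
  exact hb' y rfl

theorem of_comp {K : Ideal R} {g : R} {q : R →+* Q} {ρ : Q →+* H} (hq : IsHenselEquivAway K g q)
    (hρ : IsHenselEquivAway K g (ρ.comp q)) : IsHenselEquivAway (K.map q) 1 ρ :=
  ⟨by simp, fun T _ J hJ f hf _ => (hq.of_comp_of_dvd dvd_rfl hρ).2 T J hJ f hf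
    (hq.1.map f)⟩

theorem hom_ext {K : Ideal R} {g : R} {q : R →+* Q} (h : IsHenselEquivAway K g q) {C : Type u}
    [CommRing C] {J : Ideal C} (hJ : HenselianRing C J) {a b : Q →+* C}
    (hab : a.comp q = b.comp q) (hK : K.map (a.comp q) ≤ J) : a = b :=
  (h.2 C J hJ (a.comp q) hK (h.1.map a)).unique rfl hab.symm

theorem localizationAway (K : Ideal R) (g : R) :
    IsHenselEquivAway K g (algebraMap R (Localization.Away g)) := by
  refine ⟨IsLocalization.Away.algebraMap_isUnit g, fun C _ J _ f _ hg =>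
    ⟨IsLocalization.Away.lift g hg, IsLocalization.Away.lift_comp g hg, fun y hy => ?_⟩⟩
  apply IsLocalization.ringHom_ext (Submonoid.powers g)
  rw [hy, IsLocalization.Away.lift_comp g hg]

end IsHenselEquivAway

theorem isUnit_map_of_sub_one_mem {K : Ideal R} {τ : R} (hτ : τ - 1 ∈ K) {C : Type u} [CommRing C]
    {J : Ideal C} (hJ : HenselianRing C J) (f : R →+* C) (hf : K.map f ≤ J) : IsUnit (f τ) :=
  isUnit_of_sub_one_mem J <| by
    simpa using hf (Ideal.mem_map_of_mem f hτ)

/-- An étale neighbourhood `q : R →+* Q` of the locally closed subset `V(K) ∩ D(g)` of `Spec R`. -/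
structure IsEtaleNhdAway (K : Ideal R) (g : R) (q : R →+* Q) : Prop where
  etale : q.Etale
  henselEquiv : IsHenselEquivAway K g q

theorem exists_pushout {Q' : Type u} [CommRing Q'] (q : R →+* Q) (q' : R →+* Q') :
    ∃ (T : Type u) (_ : CommRing T) (a : Q →+* T) (b : Q' →+* T),
      a.comp q = b.comp q' ∧ (q'.Etale → a.Etale) ∧
      ∀ (C : Type u) [CommRing C] (f : Q →+* C) (f' : Q' →+* C), f.comp q = f'.comp q' →
        ∃! h : T →+* C, h.comp a = f ∧ h.comp b = f' := by
  algebraize [q, q']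
  refine ⟨Q ⊗[R] Q', inferInstance, algebraMap Q _, Algebra.TensorProduct.includeRight.toRingHom,
    RingHom.ext fun r => (Algebra.TensorProduct.includeRight.commutes r).symm, fun h => ?_,
    fun C _ f f' hff' => ?_⟩
  · have : Algebra.Etale R Q' := h
    exact RingHom.etale_algebraMap.2 inferInstance
  algebraize [f.comp q]
  let f₁ : Q →ₐ[R] C := { f with commutes' := fun r => rfl }
  let f₂ : Q' →ₐ[R] C := { f' with commutes' := fun r => congr($hff' r).symm }
  refine ⟨(Algebra.TensorProduct.lift f₁ f₂ fun _ _ => Commute.all _ _).toRingHom,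
    ⟨?_, ?_⟩, ?_⟩
  · ext x
    change Algebra.TensorProduct.lift f₁ f₂ (fun _ _ => Commute.all _ _) (x ⊗ₜ 1) = f x
    simp [f₁]
  · ext x
    change Algebra.TensorProduct.lift f₁ f₂ (fun _ _ => Commute.all _ _) (1 ⊗ₜ x) = f' x
    simp [f₂]
  · rintro y ⟨rfl, hy⟩
    refine Algebra.TensorProduct.ringHom_ext ?_ ?_
    · ext x
      simp [f₁]
    · ext x
      simpa [f₂] using congr($hy x)

/-- An unramified algebra has open diagonal: `τ` cuts out the locus where `a` and `b` agree. -/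
theorem exists_forall_sub_mul_eq_zero {q : R →+* Q} (hq : q.Etale) {L : Type u} [CommRing L]
    (a b : Q →+* L) (hab : a.comp q = b.comp q) :
    ∃ τ : L, (∀ s, (a s - b s) * τ = 0) ∧
      ∀ (T : Type u) [CommRing T] (t : L →+* T), t.comp a = t.comp b → t τ = 1 := by
  algebraize [q, a.comp q]
  have : Algebra.Etale R Q := hq
  obtain ⟨e, he, he1⟩ :=
    (Algebra.FormallyUnramified.iff_exists_tensorProduct (R := R) (S := Q)).1 inferInstance
  let a' : Q →ₐ[R] L := { a with commutes' := fun r => rfl }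
  let b' : Q →ₐ[R] L := { b with commutes' := fun r => congr($hab.symm r) }
  let l : Q ⊗[R] Q →ₐ[R] L := Algebra.TensorProduct.lift b' a' fun _ _ => Commute.all _ _
  refine ⟨l e, fun s => ?_, fun T _ t ht => ?_⟩
  · simpa [l, a', b'] using congr(l $(he s))
  · have key : (t.comp l.toRingHom) =
        (t.comp a).comp (Algebra.TensorProduct.lmul' R (S := Q)).toRingHom := by
      refine Algebra.TensorProduct.ringHom_ext ?_ ?_
      · ext x
        simpa [l, b'] using congr($ht x).symm
      · ext x
        simp [l, a']
    simpa [he1] using congr($key e)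

namespace IsEtaleNhdAway

theorem comp {K : Ideal R} {g : R} {q : R →+* Q} {ρ : Q →+* H} (hq : IsEtaleNhdAway K g q)
    (hρ : IsEtaleNhdAway (K.map q) 1 ρ) : IsEtaleNhdAway K g (ρ.comp q) :=
  ⟨RingHom.Etale.stableUnderComposition _ _ hq.etale hρ.etale, hq.henselEquiv.comp hρ.henselEquiv⟩

theorem localizationAway (K : Ideal R) (g : R) :
    IsEtaleNhdAway K g (algebraMap R (Localization.Away g)) :=
  ⟨RingHom.etale_algebraMap.2 (Algebra.Etale.of_isLocalizationAway g),
    IsHenselEquivAway.localizationAway K g⟩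

theorem localizationAway_of_forall_isUnit (K : Ideal R) (τ : R)
    (h : ∀ (C : Type u) [CommRing C] (J : Ideal C), HenselianRing C J →
      ∀ f : R →+* C, K.map f ≤ J → IsUnit (f τ)) :
    IsEtaleNhdAway K 1 (algebraMap R (Localization.Away τ)) :=
  ⟨(localizationAway K τ).etale, by simp,
    fun C _ J hJ f hf _ => (localizationAway K τ).henselEquiv.2 C J hJ f hf (h C J hJ f hf)⟩

theorem exists_common_refinement {K : Ideal R} {g : R} {Q' : Type u} [CommRing Q'] {q : R →+* Q}
    {q' : R →+* Q'} (h : IsEtaleNhdAway K g q) (h' : IsEtaleNhdAway K g q') :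
    ∃ (T : Type u) (_ : CommRing T) (a : Q →+* T) (b : Q' →+* T),
      a.comp q = b.comp q' ∧ IsEtaleNhdAway K g (a.comp q) := by
  obtain ⟨T, _, a, b, hab, ha, hT⟩ := exists_pushout q q'
  refine ⟨T, _, a, b, hab, RingHom.Etale.stableUnderComposition _ _ h.etale (ha h'.etale),
    h.henselEquiv.1.map a, fun C _ J hJ f hf hg => ?_⟩
  obtain ⟨c, hc, hc'⟩ := h.henselEquiv.2 C J hJ f hf hg
  obtain ⟨d, hd, hd'⟩ := h'.henselEquiv.2 C J hJ f hf hg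
  obtain ⟨l, ⟨rfl, rfl⟩, hl⟩ := hT C c d (hc.trans hd.symm)
  exact ⟨l, hc, fun y hy => hl y ⟨hc' _ hy, hd' _ (by simpa [RingHom.comp_assoc, hab] using hy)⟩⟩

theorem exists_coequalizer {K : Ideal R} {g : R} {Q' : Type u} [CommRing Q'] {q : R →+* Q}
    {q' : R →+* Q'} (h : IsEtaleNhdAway K g q) (h' : IsEtaleNhdAway K g q') (a b : Q →+* Q')
    (ha : a.comp q = q') (hb : b.comp q = q') :
    ∃ (T : Type u) (_ : CommRing T) (c : Q' →+* T),
      c.comp a = c.comp b ∧ IsEtaleNhdAway K g (c.comp q') := by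
  obtain ⟨τ, hτ, hτ1⟩ := exists_forall_sub_mul_eq_zero h.etale a b (ha.trans hb.symm)
  refine ⟨Localization.Away τ, inferInstance, algebraMap _ _, RingHom.ext fun s => ?_,
    h'.comp (localizationAway_of_forall_isUnit _ _ fun C _ J hJ f hf => ?_)⟩
  · have hu : IsUnit (algebraMap Q' (Localization.Away τ) τ) :=
      IsLocalization.Away.algebraMap_isUnit τ
    refine hu.mul_right_cancel ?_
    simpa [sub_mul, sub_eq_zero] using congr(algebraMap Q' (Localization.Away τ) $(hτ s))
  · rw [hτ1 C f]
    · exact isUnit_one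
    · refine h.henselEquiv.hom_ext hJ ?_ ?_
      · rw [RingHom.comp_assoc, RingHom.comp_assoc, ha, hb]
      · rwa [RingHom.comp_assoc, ha, ← Ideal.map_map]

end IsEtaleNhdAway

end EtaleNeighbourhoods

section RootNeighbourhood

variable {R : Type u} [CommRing R]

theorem mk_aeval_eq {T : Type u} [CommRing T] [Algebra R T] {J : Ideal T} {x : T} {a : R}
    (hx : x - algebraMap R T a ∈ J) (r : R[X]) :
    Ideal.Quotient.mk J (aeval x r) = Ideal.Quotient.mk J (algebraMap R T (r.eval a)) := by
  rw [Ideal.Quotient.eq, ← aeval_algebraMap_apply_eq_algebraMap_eval, ← eval_map_algebraMap,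
    ← eval_map_algebraMap]
  exact J.mem_of_dvd (sub_dvd_eval_sub _ _ _) hx

theorem eq_of_aeval_eq_zero_of_sub_mem {T : Type u} [CommRing T] [Algebra R T] (J : Ideal T)
    [HenselianRing T J] {f : R[X]} {x y : T} (hx : aeval x f = 0) (hy : aeval y f = 0)
    (hxy : y - x ∈ J) (hd : IsUnit (aeval x (derivative f))) : x = y := by
  obtain ⟨c, hc⟩ := binomExpansion (f.map (algebraMap R T)) x (y - x)
  rw [add_sub_cancel, derivative_map] at hc
  simp only [eval_map_algebraMap, hx, hy, zero_add] at hc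
  have hu : IsUnit (aeval x (derivative f) + c * (y - x)) := by
    refine isUnit_of_isUnit_mk J ?_
    rw [map_add, map_mul, Ideal.Quotient.eq_zero_iff_mem.2 hxy, mul_zero, add_zero]
    exact hd.map _
  refine (sub_eq_zero.1 (hu.mul_left_eq_zero.1 ?_)).symm
  linear_combination -hc

/-- The standard étale pair cutting out the roots of `f` near its approximate simple root `a`:
the quotient `f /ₘ (X - a)` vanishes modulo `f(a)` at every other root. -/
noncomputable def rootPair (f : R[X]) (hf : f.Monic) (a : R) : StandardEtalePair R :=
  ⟨f, hf, derivative f * (f /ₘ (X - C a)), f /ₘ (X - C a), 0, 1, by simp⟩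

theorem eval_divByMonic_X_sub_C (f : R[X]) (a : R) :
    (f /ₘ (X - C a)).eval a = (derivative f).eval a := by
  conv_rhs => rw [← modByMonic_add_div f (X - C a), modByMonic_X_sub_C_eq_C_eval]
  simp [derivative_mul]

theorem aeval_eq_add_sub_mul {T : Type u} [CommRing T] [Algebra R T] (f : R[X]) (a : R) (x : T) :
    aeval x f = algebraMap R T (f.eval a) +
      (x - algebraMap R T a) * aeval x (f /ₘ (X - C a)) := by
  conv_lhs => rw [← modByMonic_add_div f (X - C a), modByMonic_X_sub_C_eq_C_eval]
  simp

variable {K : Ideal R} {f : R[X]} (hf : f.Monic) {a : R}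

theorem sub_mem_of_rootPair_hasMap (h0 : f.eval a ∈ K) {T : Type u} [CommRing T] [Algebra R T]
    {x : T} (hx : (rootPair f hf a).HasMap x) :
    x - algebraMap R T a ∈ K.map (algebraMap R T) := by
  have hu : IsUnit (aeval x (f /ₘ (X - C a))) := by
    have : IsUnit (aeval x (derivative f * (f /ₘ (X - C a)))) := hx.2
    rw [map_mul] at this
    exact (IsUnit.mul_iff.1 this).2
  rw [← Ideal.mul_unit_mem_iff_mem _ hu]
  have hx0 : aeval x f = 0 := hx.1
  rw [eq_sub_of_add_eq' ((aeval_eq_add_sub_mul f a x).symm.trans hx0), zero_sub]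
  exact neg_mem (Ideal.mem_map_of_mem _ h0)

theorem rootPair_hasMap (h1 : IsUnit (Ideal.Quotient.mk K (f.derivative.eval a)))
    {T : Type u} [CommRing T] [Algebra R T] {J : Ideal T} [HenselianRing T J]
    (hJ : K.map (algebraMap R T) ≤ J) {x : T} (hx : aeval x f = 0)
    (hxa : x - algebraMap R T a ∈ J) : (rootPair f hf a).HasMap x := by
  have hu := h1.map (Ideal.quotientMap J _ (Ideal.map_le_iff_le_comap.1 hJ))
  rw [Ideal.quotientMap_mk] at hu
  refine ⟨hx, ?_⟩
  change IsUnit (aeval x (derivative f * (f /ₘ (X - C a))))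
  rw [map_mul]
  refine .mul (isUnit_of_isUnit_mk J ?_) (isUnit_of_isUnit_mk J ?_)
  · rwa [mk_aeval_eq hxa]
  · rwa [mk_aeval_eq hxa, eval_divByMonic_X_sub_C]

theorem isEtaleNhdAway_rootPair (h0 : f.eval a ∈ K)
    (h1 : IsUnit (Ideal.Quotient.mk K (f.derivative.eval a))) :
    IsEtaleNhdAway K 1 (algebraMap R (rootPair f hf a).Ring) := by
  refine ⟨RingHom.etale_algebraMap.2 inferInstance, by simp, fun T _ J hJ φ hφ _ => ?_⟩
  let := φ.toAlgebra
  obtain ⟨x, hx, hxa⟩ := hJ.is_henselian (f.map φ) (hf.map φ) (φ a)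
    (by
      rw [eval_map_apply]
      exact hφ (Ideal.mem_map_of_mem _ h0))
    (by
      rw [derivative_map, eval_map_apply]
      simpa using h1.map (Ideal.quotientMap J φ (Ideal.map_le_iff_le_comap.1 hφ)))
  have hx0 : aeval x f = 0 := by rwa [← eval_map_algebraMap]
  have hm := rootPair_hasMap hf h1 (J := J) hφ hx0 hxa
  refine ⟨(rootPair f hf a).lift x hm, ((rootPair f hf a).lift x hm).comp_algebraMap, ?_⟩
  intro y hy
  let y' : (rootPair f hf a).Ring →ₐ[R] T := { y with commutes' := fun r => congr($hy r) }
  have hy' : y' (rootPair f hf a).X = x := by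
    have hm' := (rootPair f hf a).hasMap_X.map y'
    refine (eq_of_aeval_eq_zero_of_sub_mem J hx0 hm'.1 ?_ hm.isUnit_derivative_f).symm
    rw [← sub_sub_sub_cancel_right]
    exact J.sub_mem (hφ (sub_mem_of_rootPair_hasMap hf h0 hm')) hxa
  exact congrArg AlgHom.toRingHom <| (rootPair f hf a).hom_ext (g := (rootPair f hf a).lift x hm)
    (by rw [hy', StandardEtalePair.lift_X])

theorem IsEtaleNhdAway.exists_isRoot (hf : f.Monic) (h0 : f.eval a ∈ K)
    (h1 : IsUnit (Ideal.Quotient.mk K (f.derivative.eval a))) :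
    ∃ (Q : Type u) (_ : CommRing Q) (q : R →+* Q), IsEtaleNhdAway K 1 q ∧
      ∃ x : Q, (f.map q).IsRoot x ∧ x - q a ∈ K.map q :=
  ⟨(rootPair f hf a).Ring, inferInstance, algebraMap R _, isEtaleNhdAway_rootPair hf h0 h1,
    (rootPair f hf a).X, (eval_map_algebraMap _ _).trans (rootPair f hf a).hasMap_X.1,
    sub_mem_of_rootPair_hasMap hf h0 (rootPair f hf a).hasMap_X⟩

end RootNeighbourhood

section FilteredColimit

open CategoryTheory Limits

variable {J : Type u} [SmallCategory J] {F : J ⥤ CommRingCat.{u}}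
  {c : Cocone F} (hc : IsColimit c)

theorem isUnit_ι_of_isUnit_map {j k : J} (φ : j ⟶ k) {x : F.obj j} (h : IsUnit (F.map φ x)) :
    IsUnit (c.ι.app j x) := by
  have := h.map (c.ι.app k).hom
  rwa [← ConcreteCategory.comp_apply, c.w] at this

variable {R : Type u} [CommRing R] {K : Ideal R} {q : ∀ j, R →+* F.obj j}
  (hq : ∀ ⦃j k⦄ (φ : j ⟶ k), (F.map φ).hom.comp (q j) = q k) {ρ : R →+* c.pt}
  (hρ : ∀ j, (c.ι.app j).hom.comp (q j) = ρ)

include hq in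
theorem map_mem_ideal_map {j k : J} (φ : j ⟶ k) {x : F.obj j} (hx : x ∈ K.map (q j)) :
    F.map φ x ∈ K.map (q k) := by
  have := Ideal.mem_map_of_mem (F.map φ).hom hx
  rwa [Ideal.map_map, hq] at this

variable [IsFiltered J]

include hc in
theorem exists_polynomial_map_ι_eq (f : c.pt[X]) :
    ∃ (j : J) (p : (F.obj j)[X]), p.map (c.ι.app j).hom = f := by
  induction f using Polynomial.induction_on' with
  | monomial n a =>
    obtain ⟨j, x, rfl⟩ := Concrete.isColimit_exists_rep F hc a
    exact ⟨j, monomial n x, by simp⟩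
  | add f f' hf hf' =>
    obtain ⟨j, p, rfl⟩ := hf
    obtain ⟨j', p', rfl⟩ := hf'
    refine ⟨IsFiltered.max j j', p.map (F.map (IsFiltered.leftToMax j j')).hom +
      p'.map (F.map (IsFiltered.rightToMax j j')).hom, ?_⟩
    simp only [Polynomial.map_add, Polynomial.map_map, ← CommRingCat.hom_comp, c.w]

include hc in
theorem exists_monic_polynomial_map_ι_eq {f : c.pt[X]} (hf : f.Monic) :
    ∃ (j : J) (p : (F.obj j)[X]), p.Monic ∧ p.map (c.ι.app j).hom = f := by
  obtain ⟨j, p, hp⟩ := exists_polynomial_map_ι_eq hc f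
  obtain ⟨p', hp', -, hmonic⟩ :=
    lifts_and_natDegree_eq_and_monic ((mem_lifts (f := (c.ι.app j).hom) f).2 ⟨p, hp⟩) hf
  exact ⟨j, p', hmonic, hp'⟩

include hc hq hρ

theorem exists_mem_ideal_map_ι_eq {x : c.pt} (hx : x ∈ K.map ρ) :
    ∃ (j : J), ∃ y ∈ K.map (q j), c.ι.app j y = x := by
  induction hx using Submodule.span_induction with
  | mem x h =>
    obtain ⟨r, hr, rfl⟩ := h
    obtain ⟨j⟩ := IsFiltered.nonempty (C := J)
    exact ⟨j, q j r, Ideal.mem_map_of_mem _ hr, congr($(hρ j) r)⟩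
  | zero =>
    obtain ⟨j⟩ := IsFiltered.nonempty (C := J)
    exact ⟨j, 0, zero_mem _, map_zero (c.ι.app j).hom⟩
  | add x x' _ _ hx hx' =>
    obtain ⟨j, y, hy, rfl⟩ := hx
    obtain ⟨j', y', hy', rfl⟩ := hx'
    refine ⟨IsFiltered.max j j', F.map (IsFiltered.leftToMax j j') y +
      F.map (IsFiltered.rightToMax j j') y',
      add_mem (map_mem_ideal_map hq _ hy) (map_mem_ideal_map hq _ hy'), ?_⟩
    simp [← ConcreteCategory.comp_apply]
  | smul w x _ hx =>
    obtain ⟨j, y, hy, rfl⟩ := hx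
    obtain ⟨j', w, rfl⟩ := Concrete.isColimit_exists_rep F hc w
    refine ⟨IsFiltered.max j j', F.map (IsFiltered.rightToMax j j') w *
      F.map (IsFiltered.leftToMax j j') y,
      Ideal.mul_mem_left _ _ (map_mem_ideal_map hq _ hy), ?_⟩
    simp [← ConcreteCategory.comp_apply]

theorem exists_map_mem_ideal_map {j : J} {x : F.obj j} (hx : c.ι.app j x ∈ K.map ρ) :
    ∃ (k : J) (φ : j ⟶ k), F.map φ x ∈ K.map (q k) := by
  obtain ⟨i, y, hy, h⟩ := exists_mem_ideal_map_ι_eq hc hq hρ hx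
  obtain ⟨k, φ, ψ, hk⟩ := Concrete.isColimit_exists_of_rep_eq F hc x y h.symm
  exact ⟨k, φ, hk ▸ map_mem_ideal_map hq ψ hy⟩

theorem exists_approx_root_of_isColimit {f : c.pt[X]} (hf : f.Monic) {a : c.pt}
    (h0 : f.eval a ∈ K.map ρ)
    (h1 : IsUnit (Ideal.Quotient.mk (K.map ρ) (f.derivative.eval a))) :
    ∃ (j : J) (p : (F.obj j)[X]) (x : F.obj j), p.Monic ∧ p.map (c.ι.app j).hom = f ∧
      c.ι.app j x = a ∧ p.eval x ∈ K.map (q j) ∧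
      IsUnit (Ideal.Quotient.mk (K.map (q j)) (p.derivative.eval x)) := by
  obtain ⟨v, hv⟩ := h1.exists_right_inv
  obtain ⟨v, rfl⟩ := Ideal.Quotient.mk_surjective v
  rw [← map_mul, ← map_one (Ideal.Quotient.mk _), Ideal.Quotient.eq] at hv
  obtain ⟨j, p, x, y, hp, rfl, rfl, rfl⟩ : ∃ (j : J) (p : (F.obj j)[X]) (x y : F.obj j),
      p.Monic ∧ p.map (c.ι.app j).hom = f ∧ c.ι.app j x = a ∧ c.ι.app j y = v := by
    obtain ⟨j₀, p, hp, rfl⟩ := exists_monic_polynomial_map_ι_eq hc hf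
    obtain ⟨j₁, x, rfl⟩ := Concrete.isColimit_exists_rep F hc a
    obtain ⟨j₂, y, rfl⟩ := Concrete.isColimit_exists_rep F hc v
    refine ⟨_, p.map (F.map (IsFiltered.firstToMax₃ j₀ j₁ j₂)).hom,
      F.map (IsFiltered.secondToMax₃ j₀ j₁ j₂) x, F.map (IsFiltered.thirdToMax₃ j₀ j₁ j₂) y,
      hp.map _, ?_, ?_, ?_⟩
    · rw [Polynomial.map_map, ← CommRingCat.hom_comp, c.w]
    all_goals rw [← ConcreteCategory.comp_apply, c.w]
  rw [eval_map_apply (c.ι.app j).hom] at h0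
  rw [derivative_map, eval_map_apply (c.ι.app j).hom, ← map_mul, ← map_one (c.ι.app j).hom,
    ← map_sub] at hv
  obtain ⟨k, φ, hφ⟩ := exists_map_mem_ideal_map hc hq hρ h0
  rw [← c.w φ, CommRingCat.hom_comp, RingHom.comp_apply] at hv
  obtain ⟨l, ψ, hψ⟩ := exists_map_mem_ideal_map hc hq hρ hv
  have hval := map_mem_ideal_map hq ψ hφ
  rw [← ConcreteCategory.comp_apply, ← F.map_comp] at hval hψ
  rw [map_sub, map_mul, map_one, ← Ideal.Quotient.eq, map_mul, map_one] at hψ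
  refine ⟨l, p.map (F.map (φ ≫ ψ)).hom, F.map (φ ≫ ψ) x, hp.map _, ?_, ?_, ?_, ?_⟩
  · rw [Polynomial.map_map, ← CommRingCat.hom_comp, c.w]
  · rw [← ConcreteCategory.comp_apply, c.w]
  · rwa [eval_map_apply (F.map (φ ≫ ψ)).hom]
  · rw [derivative_map, eval_map_apply (F.map (φ ≫ ψ)).hom]
    exact .of_mul_eq_one _ hψ

theorem henselianRing_of_isColimit
    (hunit : ∀ j, ∀ z ∈ K.map (q j), ∃ (k : J) (φ : j ⟶ k), IsUnit (F.map φ (z + 1)))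
    (hroot : ∀ j (p : (F.obj j)[X]) (x : F.obj j), p.Monic → p.eval x ∈ K.map (q j) →
      IsUnit (Ideal.Quotient.mk (K.map (q j)) (p.derivative.eval x)) →
      ∃ (k : J) (φ : j ⟶ k) (y : F.obj k), (p.map (F.map φ).hom).IsRoot y ∧
        y - F.map φ x ∈ K.map (q k)) :
    HenselianRing c.pt (K.map ρ) where
  jac x hx := by
    rw [Ideal.mem_jacobson_bot]
    intro y
    obtain ⟨j, z, hz, hzx⟩ := exists_mem_ideal_map_ι_eq hc hq hρ (Ideal.mul_mem_right y _ hx)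
    obtain ⟨k, φ, hφ⟩ := hunit j z hz
    simpa [hzx] using isUnit_ι_of_isUnit_map φ hφ (c := c)
  is_henselian f hf a h0 h1 := by
    obtain ⟨j, p, x, hp, rfl, rfl, h0, h1⟩ := exists_approx_root_of_isColimit hc hq hρ hf h0 h1
    obtain ⟨k, φ, y, hy, hyx⟩ := hroot j p x hp h0 h1
    refine ⟨c.ι.app k y, ?_, ?_⟩
    · have := hy.map (f := (c.ι.app k).hom)
      rwa [Polynomial.map_map, ← CommRingCat.hom_comp, c.w] at this
    · have := Ideal.mem_map_of_mem (c.ι.app k).hom hyx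
      rwa [Ideal.map_map, hρ, map_sub, ← ConcreteCategory.comp_apply, c.w] at this

end FilteredColimit

open CategoryTheory Limits in
theorem isHenselEquivAway_of_isColimit {J : Type u} [SmallCategory J] [IsFiltered J]
    {G F : J ⥤ CommRingCat.{u}} {cG : Cocone G} {cF : Cocone F} (hG : IsColimit cG)
    (hF : IsColimit cF) (η : G ⟶ F) (ρ : cG.pt ⟶ cF.pt)
    (hρ : ∀ j, cG.ι.app j ≫ ρ = η.app j ≫ cF.ι.app j) {K : ∀ j, Ideal (G.obj j)}
    {g : ∀ j, G.obj j} (h : ∀ j, IsHenselEquivAway (K j) (g j) (η.app j).hom)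
    {K' : Ideal cG.pt} (hK : ∀ j, (K j).map (cG.ι.app j).hom ≤ K') {g' : cG.pt}
    (hg : ∀ j, cG.ι.app j (g j) = g') : IsHenselEquivAway K' g' ρ.hom := by
  refine ⟨?_, fun T _ I hI f hf hgf => ?_⟩
  · obtain ⟨j₀⟩ := IsFiltered.nonempty (C := J)
    have := (h j₀).1.map (cF.ι.app j₀).hom
    rwa [← RingHom.comp_apply, ← CommRingCat.hom_comp, ← hρ, CommRingCat.hom_comp,
      RingHom.comp_apply, hg] at this
  let f' : cG.pt ⟶ CommRingCat.of T := CommRingCat.ofHom f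
  have huniq (j : J) : ∃! u : F.obj j ⟶ CommRingCat.of T, η.app j ≫ u = cG.ι.app j ≫ f' := by
    obtain ⟨u, hu, hu'⟩ := (h j).2 T I hI (f.comp (cG.ι.app j).hom)
      (by rw [← Ideal.map_map]; exact (Ideal.map_mono (hK j)).trans hf) (by simpa [hg j] using hgf)
    exact ⟨CommRingCat.ofHom u, CommRingCat.hom_ext hu,
      fun v hv => CommRingCat.hom_ext (hu' v.hom congr(($hv).hom))⟩
  choose u hu hu' using huniq
  dsimp only at hu hu'
  let s : Cocone F := ⟨CommRingCat.of T, u, fun j k φ => by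
    simpa using hu' j _ (by rw [← η.naturality_assoc, hu, cG.w_assoc])⟩
  refine ⟨(hF.desc s).hom, ?_, fun v hv => ?_⟩
  · suffices ρ ≫ hF.desc s = f' from congr(($this).hom)
    refine hG.hom_ext fun j => ?_
    rw [reassoc_of% hρ, hF.fac, hu]
  · suffices CommRingCat.ofHom v = hF.desc s from congr(($this).hom)
    have hv' : ρ ≫ CommRingCat.ofHom v = f' := CommRingCat.hom_ext hv
    refine hF.uniq s _ fun j => hu' j _ ?_
    rw [← hv', reassoc_of% hρ]

noncomputable section Existence

open CategoryTheory Limits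

variable {R : Type u} [CommRing R]

theorem IsEtaleNhdAway.comp_ringEquiv {Q Q' : Type u} [CommRing Q] [CommRing Q'] {K : Ideal R}
    {g : R} {q : R →+* Q} (h : IsEtaleNhdAway K g q) (e : Q ≃+* Q') :
    IsEtaleNhdAway K g (e.toRingHom.comp q) := by
  refine ⟨RingHom.Etale.stableUnderComposition _ _ h.etale (.of_bijective e.bijective),
    h.henselEquiv.1.map e.toRingHom, fun T _ J hJ f hf hg => ?_⟩
  obtain ⟨a, ha, ha'⟩ := h.henselEquiv.2 T J hJ f hf hg
  refine ⟨a.comp e.symm.toRingHom, ?_, fun y hy => ?_⟩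
  · rw [← ha]
    ext
    simp
  · rw [← ha' (y.comp e.toRingHom) hy]
    ext
    simp

/-- A presentation of an étale neighbourhood of `V(K) ∩ D(g)`. These form a small filtered
category with the `R`-algebra homomorphisms as morphisms. -/
structure EtaleNhdAway (K : Ideal R) (g : R) : Type u where
  n : ℕ
  relations : Ideal (MvPolynomial (Fin n) R)
  isEtaleNhdAway : IsEtaleNhdAway K g (algebraMap R (MvPolynomial (Fin n) R ⧸ relations))

namespace EtaleNhdAway

variable {K : Ideal R} {g : R}

/-- The ring of an étale neighbourhood. -/
abbrev Ring (X : EtaleNhdAway K g) : Type u := MvPolynomial (Fin X.n) R ⧸ X.relations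

theorem exists_ringEquiv {Q : Type u} [CommRing Q] {q : R →+* Q} (h : IsEtaleNhdAway K g q) :
    ∃ (X : EtaleNhdAway K g) (e : Q ≃+* X.Ring), e.toRingHom.comp q = algebraMap R X.Ring := by
  algebraize [q]
  have : Algebra.Etale R Q := h.etale
  obtain ⟨n, J, e, -⟩ := (Algebra.FinitePresentation.iff (R := R) (A := Q)).1 inferInstance
  have he : e.symm.toRingEquiv.toRingHom.comp q = algebraMap R _ :=
    RingHom.ext e.symm.commutes
  exact ⟨⟨n, J, he ▸ h.comp_ringEquiv e.symm.toRingEquiv⟩, e.symm.toRingEquiv, he⟩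

instance : SmallCategory (EtaleNhdAway K g) where
  Hom X Y := X.Ring →ₐ[R] Y.Ring
  id X := AlgHom.id R _
  comp a b := b.comp a

instance : IsFiltered (EtaleNhdAway K g) where
  cocone_objs X Y := by
    obtain ⟨T, _, a, b, hab, hT⟩ := X.isEtaleNhdAway.exists_common_refinement Y.isEtaleNhdAway
    obtain ⟨Z, e, he⟩ := exists_ringEquiv hT
    have he' : (e.toRingHom.comp b).comp (algebraMap R Y.Ring) = algebraMap R Z.Ring := by
      rw [RingHom.comp_assoc, ← hab, he]
    exact ⟨Z, { e.toRingHom.comp a with commutes' := fun r => congr($he r) },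
      { e.toRingHom.comp b with commutes' := fun r => congr($he' r) }, trivial⟩
  cocone_maps X Y f g := by
    let f' : X.Ring →ₐ[R] Y.Ring := f
    let g' : X.Ring →ₐ[R] Y.Ring := g
    obtain ⟨T, _, t, ht, hT⟩ := X.isEtaleNhdAway.exists_coequalizer Y.isEtaleNhdAway
      f'.toRingHom g'.toRingHom f'.comp_algebraMap g'.comp_algebraMap
    obtain ⟨Z, e, he⟩ := exists_ringEquiv hT
    exact ⟨Z, { e.toRingHom.comp t with commutes' := fun r => congr($he r) },
      AlgHom.ext fun x => congr(e ($ht x))⟩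
  nonempty := ⟨(exists_ringEquiv (IsEtaleNhdAway.localizationAway K g)).choose⟩

variable (K g) in
/-- The diagram of étale neighbourhoods, whose colimit is the Henselization. -/
@[simps]
def diagram : EtaleNhdAway K g ⥤ CommRingCat.{u} where
  obj X := .of X.Ring
  map {X Y} f := CommRingCat.ofHom (f : X.Ring →ₐ[R] Y.Ring).toRingHom

/-- The structure map of an étale neighbourhood, as an object of the diagram. -/
def structureMap (X : EtaleNhdAway K g) : R →+* (diagram K g).obj X :=
  algebraMap R X.Ring

theorem isEtaleNhdAway_structureMap (X : EtaleNhdAway K g) : IsEtaleNhdAway K g X.structureMap :=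
  X.isEtaleNhdAway

theorem map_comp_structureMap {X Y : EtaleNhdAway K g} (φ : X ⟶ Y) :
    ((diagram K g).map φ).hom.comp X.structureMap = Y.structureMap :=
  AlgHom.comp_algebraMap (φ : X.Ring →ₐ[R] Y.Ring)

theorem exists_ringHom {Q : Type u} [CommRing Q] {q : R →+* Q} (h : IsEtaleNhdAway K g q) :
    ∃ (X : EtaleNhdAway K g) (e : Q →+* (diagram K g).obj X), e.comp q = X.structureMap :=
  let ⟨X, e, he⟩ := exists_ringEquiv h
  ⟨X, e.toRingHom, he⟩

theorem exists_hom (X : EtaleNhdAway K g) {Q : Type u} [CommRing Q]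
    {q : (diagram K g).obj X →+* Q} (h : IsEtaleNhdAway (K.map X.structureMap) 1 q) :
    ∃ (Y : EtaleNhdAway K g) (φ : X ⟶ Y) (e : Q →+* (diagram K g).obj Y),
      e.comp q = ((diagram K g).map φ).hom := by
  obtain ⟨Y, e, he⟩ := exists_ringEquiv (X.isEtaleNhdAway_structureMap.comp h)
  exact ⟨Y, { e.toRingHom.comp q with commutes' := fun r => congr($he r) }, e.toRingHom, rfl⟩

end EtaleNhdAway

/-- `ρ : R →+* H` exhibits `H` as a Henselization of the pair `(R[1/g], K·R[1/g])`. -/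
def IsHenselizationAway {H : Type u} [CommRing H] (K : Ideal R) (g : R) (ρ : R →+* H) : Prop :=
  HenselianRing H (K.map ρ) ∧ IsHenselEquivAway K g ρ

namespace EtaleNhdAway

variable {K : Ideal R} {g : R}

variable (K g) in
/-- The structure map from `R` to the colimit of all étale neighbourhoods. -/
def toColimit : R →+* (colimit (diagram K g) : CommRingCat.{u}) :=
  (colimit.ι (diagram K g) IsFiltered.nonempty.some).hom.comp (structureMap _)

theorem ι_comp_structureMap (X : EtaleNhdAway K g) :
    (colimit.ι (diagram K g) X).hom.comp X.structureMap = toColimit K g := by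
  have h {X Y : EtaleNhdAway K g} (φ : X ⟶ Y) :
      (colimit.ι (diagram K g) X).hom.comp X.structureMap =
        (colimit.ι (diagram K g) Y).hom.comp Y.structureMap := by
    rw [← map_comp_structureMap φ, ← RingHom.comp_assoc, ← CommRingCat.hom_comp, colimit.w]
  exact (h (IsFiltered.leftToMax X IsFiltered.nonempty.some)).trans
    (h (IsFiltered.rightToMax X IsFiltered.nonempty.some)).symm

theorem isHenselEquivAway_toColimit : IsHenselEquivAway K g (toColimit K g) :=
  have := IsFiltered.isConnected (EtaleNhdAway K g)
  isHenselEquivAway_of_isColimit (K := fun _ => K) (g := fun _ => g) (G := (Functor.const _).obj _)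
    (isColimitConstCocone (EtaleNhdAway K g) (CommRingCat.of R)) (colimit.isColimit (diagram K g))
    { app X := CommRingCat.ofHom X.structureMap
      naturality _ _ φ := CommRingCat.hom_ext (map_comp_structureMap φ).symm }
    (CommRingCat.ofHom (toColimit K g))
    (fun X => CommRingCat.hom_ext (ι_comp_structureMap X).symm)
    (fun X => X.isEtaleNhdAway_structureMap.henselEquiv) (fun _ => K.map_id.le) (fun _ => rfl)

theorem henselianRing_colimit :
    HenselianRing (colimit (diagram K g) : CommRingCat.{u}) (K.map (toColimit K g)) := by
  refine henselianRing_of_isColimit (colimit.isColimit _)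
    (fun _ _ φ => map_comp_structureMap φ) ι_comp_structureMap (fun X z hz => ?_)
    fun X p x hp h0 h1 => ?_
  · obtain ⟨Y, φ, e, he⟩ := X.exists_hom
      (IsEtaleNhdAway.localizationAway_of_forall_isUnit _ (z + 1) fun T _ J hJ f hf =>
        isUnit_map_of_sub_one_mem (by simpa using hz) hJ f hf)
    refine ⟨Y, φ, ?_⟩
    have := (IsLocalization.Away.algebraMap_isUnit (z + 1)).map e
    rwa [← RingHom.comp_apply, he] at this
  · obtain ⟨Q, _, q, hq, y, hy, hyx⟩ := IsEtaleNhdAway.exists_isRoot hp h0 h1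
    obtain ⟨Y, φ, e, he⟩ := X.exists_hom hq
    refine ⟨Y, φ, e y, ?_, ?_⟩
    · have := hy.map (f := e)
      rwa [Polynomial.map_map, he] at this
    · have := Ideal.mem_map_of_mem e hyx
      rwa [map_sub, ← RingHom.comp_apply, Ideal.map_map, he, Ideal.map_map,
        map_comp_structureMap] at this

theorem exists_lift_of_finitePresentation {A T : Type u} [CommRing A] [CommRing T] {α : A →+* R}
    {τ : A →+* T} (hτ : τ.FinitePresentation) {θ : T →+* (colimit (diagram K g) : CommRingCat.{u})}
    (hθ : θ.comp τ = (toColimit K g).comp α) :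
    ∃ (X : EtaleNhdAway K g) (θ' : T →+* (diagram K g).obj X),
      θ'.comp τ = X.structureMap.comp α ∧ (colimit.ι (diagram K g) X).hom.comp θ' = θ := by
  let η : (Functor.const _).obj (CommRingCat.of A) ⟶ diagram K g :=
    { app X := CommRingCat.ofHom (X.structureMap.comp α)
      naturality _ _ φ := CommRingCat.hom_ext (congr($(map_comp_structureMap φ).comp α)).symm }
  obtain ⟨X, θ', h, h'⟩ := RingHom.EssFiniteType.exists_eq_comp_ι_app_of_isColimit _ _ η
    (CommRingCat.ofHom τ) _ (colimit.isColimit _) hτ (CommRingCat.ofHom θ) fun X =>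
      CommRingCat.hom_ext (hθ.trans congr($(X.ι_comp_structureMap).comp α).symm)
  exact ⟨X, θ'.hom, congr(($h).hom), congr(($h').hom).symm⟩

theorem exists_comp_eq_zero {Q : Type u} [CommRing Q] {q : R →+* Q} (hq : IsEtaleNhdAway K g q)
    {φ : Q →+* (colimit (diagram K g) : CommRingCat.{u})} (hφ : φ.comp q = toColimit K g)
    {x : Q} (hx : φ x = 0) : ∃ (Q' : Type u) (_ : CommRing Q') (t : Q →+* Q'),
      IsEtaleNhdAway K g (t.comp q) ∧ t x = 0 := by
  obtain ⟨X, e, he⟩ := exists_ringHom hq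
  have hφ' : φ = (colimit.ι (diagram K g) X).hom.comp e := by
    refine hq.henselEquiv.hom_ext henselianRing_colimit ?_ (by rw [hφ])
    rw [hφ, RingHom.comp_assoc, he, ι_comp_structureMap]
  have hx' : colimit.ι (diagram K g) X (e x) =
      colimit.ι (diagram K g) X (0 : (diagram K g).obj X) := by
    have : colimit.ι (diagram K g) X (e x) = φ x := congr($hφ' x).symm
    rw [this, hx]
    exact (map_zero (colimit.ι (diagram K g) X).hom).symm
  obtain ⟨Z, a, b, hab⟩ := Concrete.colimit_exists_of_rep_eq (diagram K g) _ _ hx'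
  refine ⟨(diagram K g).obj Z, inferInstance, ((diagram K g).map a).hom.comp e, ?_,
    hab.trans (map_zero ((diagram K g).map b).hom)⟩
  rw [RingHom.comp_assoc, he, map_comp_structureMap]
  exact Z.isEtaleNhdAway_structureMap

end EtaleNhdAway

/-- The Henselization is a filtered colimit of étale neighbourhoods. -/
theorem exists_isHenselizationAway (K : Ideal R) (g : R) :
    ∃ (H : Type u) (_ : CommRing H) (ρ : R →+* H), IsHenselizationAway K g ρ ∧
      (∀ (A T : Type u) [CommRing A] [CommRing T] (α : A →+* R) (τ : A →+* T) (θ : T →+* H),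
        τ.FinitePresentation → θ.comp τ = ρ.comp α →
          ∃ (Q : Type u) (_ : CommRing Q) (q : R →+* Q) (φ : Q →+* H) (θ' : T →+* Q),
            IsEtaleNhdAway K g q ∧ φ.comp q = ρ ∧ θ'.comp τ = q.comp α ∧ φ.comp θ' = θ) ∧
      ∀ (Q : Type u) [CommRing Q] (q : R →+* Q) (φ : Q →+* H), IsEtaleNhdAway K g q →
        φ.comp q = ρ → ∀ x, φ x = 0 → ∃ (Q' : Type u) (_ : CommRing Q') (t : Q →+* Q'),
          IsEtaleNhdAway K g (t.comp q) ∧ t x = 0 := by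
  refine ⟨(colimit (EtaleNhdAway.diagram K g) : CommRingCat.{u}), inferInstance,
    EtaleNhdAway.toColimit K g,
    ⟨EtaleNhdAway.henselianRing_colimit, EtaleNhdAway.isHenselEquivAway_toColimit⟩,
    fun A T _ _ α τ θ hτ hθ => ?_,
    fun Q _ q φ hq hφ x hx => EtaleNhdAway.exists_comp_eq_zero hq hφ hx⟩
  obtain ⟨X, θ', h, h'⟩ := EtaleNhdAway.exists_lift_of_finitePresentation hτ hθ
  exact ⟨_, inferInstance, _, _, θ', X.isEtaleNhdAway_structureMap, X.ι_comp_structureMap, h, h'⟩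

end Existence

section HenselizationAway

variable {R H : Type u} [CommRing R] [CommRing H] {K : Ideal R} {g : R} {ρ : R →+* H}

theorem isHenselization_iff_isHenselizationAway_one :
    IsHenselization K ρ ↔ IsHenselizationAway K 1 ρ :=
  ⟨fun h => ⟨h.1, by simp, fun T _ J hJ f hf _ => h.2 T J hJ f hf⟩,
    fun h => ⟨h.1, fun T _ J hJ f hf => h.2.2 T J hJ f hf (by simp)⟩⟩

theorem IsHenselEquivAway.exists_comp_eq_of_field {Q F : Type u} [CommRing Q] [Field F]
    {q : R →+* Q} (h : IsHenselEquivAway K g q) {f : R →+* F} (hK : K ≤ RingHom.ker f)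
    (hg : f g ≠ 0) : ∃ φ : Q →+* F, φ.comp q = f :=
  (h.2 F ⊥ henselianRing_bot f (Ideal.map_le_iff_le_comap.2 hK) (isUnit_iff_ne_zero.2 hg)).exists

/-- Flatness of `q` turns `q z = 0` into a relation `1 = ∑ j, aⱼ yⱼ` with all `aⱼ` killing `z`. -/
theorem IsEtaleNhdAway.exists_notMem_mul_eq_zero {Q : Type u} [CommRing Q] {q : R →+* Q}
    (h : IsEtaleNhdAway K g q) (m : Ideal R) [m.IsPrime] (hK : K ≤ m) (hg : g ∉ m) {z : R}
    (hz : q z = 0) : ∃ s ∉ m, s * z = 0 := by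
  obtain ⟨φ, hφ⟩ := h.henselEquiv.exists_comp_eq_of_field (f := algebraMap R m.ResidueField)
    (fun x hx => by simpa using hK hx) (by simpa using hg)
  algebraize [q]
  have : Algebra.Etale R Q := h.etale
  obtain ⟨κ, a, y, h1, ha⟩ := Module.Flat.isTrivialRelation_of_sum_smul_eq_zero (R := R) (M := Q)
    (f := fun _ : Unit => z) (x := fun _ => (1 : Q)) (by
      simpa [Algebra.smul_def, RingHom.algebraMap_toAlgebra] using hz)
  by_contra! hm
  have hφa (j) : φ (a () j • y j) = 0 := by
    have hmem : a () j ∈ m := by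
      by_contra hj
      exact hm _ hj (by simpa [mul_comm] using ha j)
    have : φ (q (a () j)) = 0 := by
      rw [← RingHom.comp_apply, hφ]
      simpa using hmem
    rw [Algebra.smul_def, map_mul, RingHom.algebraMap_toAlgebra, this, zero_mul]
  have := congr(φ $(h1 ()))
  rw [map_one, map_sum, Finset.sum_eq_zero fun j _ => hφa j] at this
  exact one_ne_zero this

namespace IsHenselizationAway

theorem eq_id_of_comp_eq (h : IsHenselizationAway K g ρ) {f : H →+* H} (hf : f.comp ρ = ρ) :
    f = RingHom.id H :=
  h.2.hom_ext h.1 (by rw [hf]; rfl) (by rw [hf])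

theorem exists_lift (h : IsHenselizationAway K g ρ) {Q : Type u} [CommRing Q] {q : R →+* Q}
    (hq : IsHenselEquivAway K g q) : ∃ φ : Q →+* H, φ.comp q = ρ :=
  (hq.2 H _ h.1 ρ le_rfl h.2.1).exists

theorem hom_ext (h : IsHenselizationAway K g ρ) {Q : Type u} [CommRing Q] {q : R →+* Q}
    (hq : IsHenselEquivAway K g q) {a b : Q →+* H} (ha : a.comp q = ρ) (hb : b.comp q = ρ) :
    a = b :=
  hq.hom_ext h.1 (by rw [ha, hb]) (by rw [ha])

theorem exists_ringEquiv {H' : Type u} [CommRing H'] {ρ' : R →+* H'}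
    (h : IsHenselizationAway K g ρ) (h' : IsHenselizationAway K g ρ') :
    ∃ e : H ≃+* H', e.toRingHom.comp ρ = ρ' := by
  obtain ⟨a, ha⟩ := h'.exists_lift h.2
  obtain ⟨b, hb⟩ := h.exists_lift h'.2
  exact ⟨RingEquiv.ofRingHom a b (h'.eq_id_of_comp_eq (by rw [RingHom.comp_assoc, hb, ha]))
    (h.eq_id_of_comp_eq (by rw [RingHom.comp_assoc, ha, hb])), ha⟩

theorem exists_etaleNhd_of_finitePresentation (h : IsHenselizationAway K g ρ) {A T : Type u}
    [CommRing A] [CommRing T] {α : A →+* R} {τ : A →+* T} (hτ : τ.FinitePresentation) {θ : T →+* H}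
    (hθ : θ.comp τ = ρ.comp α) :
    ∃ (Q : Type u) (_ : CommRing Q) (q : R →+* Q) (φ : Q →+* H) (θ' : T →+* Q),
      IsEtaleNhdAway K g q ∧ φ.comp q = ρ ∧ θ'.comp τ = q.comp α ∧ φ.comp θ' = θ := by
  obtain ⟨H', _, ρ', h', hlift, -⟩ := exists_isHenselizationAway K g
  obtain ⟨e, he⟩ := h.exists_ringEquiv h'
  obtain ⟨Q, _, q, φ, θ', hq, hφ, hτθ, hφθ⟩ := hlift A T α τ (e.toRingHom.comp θ) hτ (by
    rw [RingHom.comp_assoc, hθ, ← he, RingHom.comp_assoc])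
  refine ⟨Q, _, q, e.symm.toRingHom.comp φ, θ', hq, ?_, hτθ, ?_⟩
  · rw [RingHom.comp_assoc, hφ, ← he]
    ext
    simp
  · rw [RingHom.comp_assoc, hφθ]
    ext
    simp

theorem exists_etaleNhd (h : IsHenselizationAway K g ρ) {n : ℕ} (x : Fin n → H) :
    ∃ (Q : Type u) (_ : CommRing Q) (q : R →+* Q) (φ : Q →+* H),
      IsEtaleNhdAway K g q ∧ φ.comp q = ρ ∧ ∃ y : Fin n → Q, φ ∘ y = x := by
  obtain ⟨Q, _, q, φ, θ, hq, hφ, -, hθ⟩ := h.exists_etaleNhd_of_finitePresentation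
    (α := RingHom.id R) (τ := MvPolynomial.C) (θ := MvPolynomial.eval₂Hom ρ x)
    (RingHom.finitePresentation_algebraMap.2 inferInstance)
    (MvPolynomial.eval₂Hom_comp_C ρ x)
  exact ⟨Q, _, q, φ, hq, hφ, fun i => θ (.X i), funext fun i => by
    simpa using congr($hθ (.X i))⟩

theorem exists_notMem_mul_eq_zero (h : IsHenselizationAway K g ρ) (m : Ideal R) [m.IsPrime]
    (hK : K ≤ m) (hg : g ∉ m) {z : R} (hz : ρ z = 0) : ∃ s ∉ m, s * z = 0 := by
  obtain ⟨H', _, ρ', h', -, hzero⟩ := exists_isHenselizationAway K g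
  obtain ⟨e, he⟩ := h.exists_ringEquiv h'
  have hloc := IsEtaleNhdAway.localizationAway K g
  obtain ⟨φ, hφ⟩ := h'.exists_lift hloc.henselEquiv
  obtain ⟨Q, _, t, ht, htz⟩ := hzero _ _ φ hloc hφ (algebraMap R _ z) (by
    rw [← RingHom.comp_apply, hφ, ← he]
    simp [hz])
  exact ht.exists_notMem_mul_eq_zero m hK hg htz

end IsHenselizationAway

theorem exists_notMem_of_span_range_eq_top {ι : Type*} {g : ι → R}
    (hg : Ideal.span (Set.range g) = ⊤) {z : Ideal R} (hz : z ≠ ⊤) : ∃ i, g i ∉ z := by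
  by_contra! hall
  exact hz (top_le_iff.1 (hg ▸ Ideal.span_le.2 (Set.range_subset_iff.2 hall)))

/-- The annihilator of such a `c` lies in no maximal ideal. -/
theorem eq_zero_of_forall_isHenselizationAway [HenselianRing R K] {ι : Type*} {g : ι → R}
    (hg : Ideal.span (Set.range g) = ⊤) {H : ι → Type u} [∀ i, CommRing (H i)]
    {ρ : ∀ i, R →+* H i} (hρ : ∀ i, IsHenselizationAway K (g i) (ρ i)) {c : R}
    (hc : ∀ i, ρ i c = 0) : c = 0 := by
  have hann : (Submodule.span R {c}).annihilator = ⊤ := by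
    by_contra hne
    obtain ⟨m, hm, hle⟩ := Ideal.exists_le_maximal _ hne
    have hK : K ≤ m := (HenselianRing.jac (I := K)).trans (sInf_le ⟨bot_le, hm⟩)
    obtain ⟨i, hi⟩ := exists_notMem_of_span_range_eq_top hg hm.ne_top
    obtain ⟨s, hs, hsc⟩ := (hρ i).exists_notMem_mul_eq_zero m hK hi (hc i)
    exact hs (hle ((Submodule.mem_annihilator_span_singleton _ _).2 hsc))
  have h1 : (1 : R) ∈ (Submodule.span R {c}).annihilator := hann ▸ Submodule.mem_top
  rwa [Submodule.mem_annihilator_span_singleton, one_smul] at h1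

theorem eq_of_forall_isHenselizationAway [HenselianRing R K] {ι : Type*} {g : ι → R}
    (hg : Ideal.span (Set.range g) = ⊤) {H : ι → Type u} [∀ i, CommRing (H i)]
    {ρ : ∀ i, R →+* H i} (hρ : ∀ i, IsHenselizationAway K (g i) (ρ i)) {x y : R}
    (hxy : ∀ i, ρ i x = ρ i y) : x = y :=
  sub_eq_zero.1 <| eq_zero_of_forall_isHenselizationAway hg hρ fun i => by
    rw [map_sub, hxy, sub_self]

end HenselizationAway

section Roots

variable {R : Type u} [CommRing R]

theorem exists_aeval_esymm_eq_of_isSymmetric {N : ℕ} {p : MvPolynomial (Fin N) ℤ}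
    (hp : p.IsSymmetric) : ∃ p', MvPolynomial.aeval (R := ℤ)
      (fun i : Fin N => MvPolynomial.esymm (Fin N) ℤ (i + 1)) p' = p := by
  obtain ⟨p', hp'⟩ := MvPolynomial.esymmAlgHom_surjective (σ := Fin N) (n := N) ℤ (by simp) ⟨p, hp⟩
  refine ⟨p', ?_⟩
  rw [← MvPolynomial.esymmAlgHom_apply, hp']

theorem isSymmetric_coeff_prod_powersetCard (N d i : ℕ) :
    ((∏ T ∈ Finset.powersetCard d Finset.univ,
      (X - C (∏ k ∈ T, MvPolynomial.X (R := ℤ) (σ := Fin N) k))).coeff i).IsSymmetric := by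
  intro σ
  let ρ : MvPolynomial (Fin N) ℤ →+* MvPolynomial (Fin N) ℤ :=
    (MvPolynomial.rename σ : _ →ₐ[ℤ] _).toRingHom
  change ρ _ = _
  rw [← coeff_map]
  simp only [Polynomial.map_prod, Polynomial.map_sub, map_X, map_C, map_prod]
  congr 1
  refine Finset.prod_equiv σ.finsetCongr (fun T => ?_) fun T _ => ?_
  · simp
  · simp [ρ]

/-- The coefficients of `∏_T (X - ∏_{k ∈ T} rₖ)` are symmetric in the `rₖ`, hence are universal
polynomials in the coefficients of `∏ₖ (X - rₖ)`. -/
theorem exists_monic_map_eq_prod_powersetCard (f : R[X]) (N d : ℕ) : ∃ p : R[X], p.Monic ∧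
    ∀ (S : Type u) [CommRing S] (ψ : R →+* S) (r : Fin N → S),
      f.map ψ = ∏ k, (X - C (r k)) →
        p.map ψ = ∏ T ∈ Finset.powersetCard d Finset.univ, (X - C (∏ k ∈ T, r k)) := by
  let φ := MvPolynomial.aeval (R := ℤ) fun i : Fin N => MvPolynomial.esymm (Fin N) ℤ (i + 1)
  obtain ⟨P, hP, -, hPm⟩ := lifts_and_natDegree_eq_and_monic
    ((lifts_iff_coeff_lifts (f := φ.toRingHom) _).2 fun i =>
      exists_aeval_esymm_eq_of_isSymmetric (isSymmetric_coeff_prod_powersetCard N d i))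
    (monic_prod_of_monic _ (fun T => X - C (∏ k ∈ T, MvPolynomial.X k)) fun T _ =>
      monic_X_sub_C _)
  let ε := MvPolynomial.aeval (R := ℤ) fun i : Fin N => (-1) ^ ((i : ℕ) + 1) * f.coeff (N - (i + 1))
  refine ⟨P.map ε.toRingHom, hPm.map _, fun S _ ψ r hr => ?_⟩
  have hcomp : ψ.comp ε.toRingHom = (MvPolynomial.aeval (R := ℤ) r).toRingHom.comp φ.toRingHom := by
    refine MvPolynomial.ringHom_ext' (RingHom.ext_int _ _) fun i => ?_
    have hi : (Finset.univ.val.map r).card - (N - (i + 1)) = i + 1 := by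
      rw [Multiset.card_map, Finset.card_val, Finset.card_fin]
      omega
    have hcoeff : ψ (f.coeff (N - (i + 1))) =
        (-1) ^ ((i : ℕ) + 1) * (Finset.univ.val.map r).esymm (i + 1) := by
      have hprod : ∏ k, (X - C (r k)) = ((Finset.univ.val.map r).map fun t => X - C t).prod := by
        rw [Multiset.map_map]
        rfl
      rw [← coeff_map, hr, hprod, Multiset.prod_X_sub_C_coeff _ (by simp), hi]
    simp [ε, φ, hcoeff, MvPolynomial.aeval_esymm_eq_multiset_esymm, ← mul_assoc, ← mul_pow]
  rw [Polynomial.map_map, hcomp, ← Polynomial.map_map, hP]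
  simp [Polynomial.map_prod]

theorem card_filter_ne_zero_eq {E : Type*} [CommRing E] [IsDomain E] [DecidableEq E] {n : ℕ}
    {a : Fin (n + n) → E} (ha : ∏ k, (X - C (a k)) = X ^ n * (X - 1) ^ n) :
    (Finset.univ.filter fun k => a k ≠ 0).card = n := by
  have hroots : Finset.univ.val.map a = Multiset.replicate n 0 + Multiset.replicate n 1 := by
    have hprod : ((Finset.univ.val.map a).map fun t => X - C t).prod = X ^ n * (X - 1) ^ n := by
      rw [← ha, Multiset.map_map]
      rfl
    rw [← roots_multiset_prod_X_sub_C (Finset.univ.val.map a), hprod, ← C_1, roots_mul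
      (((monic_X_pow n).mul ((monic_X_sub_C 1).pow n)).ne_zero), roots_pow, roots_pow, roots_X,
      roots_X_sub_C]
    simp [Multiset.nsmul_singleton]
  have h0 : (Multiset.replicate n (0 : E)).filter (· ≠ 0) = 0 :=
    Multiset.filter_eq_nil.2 fun x hx => not_not.2 (Multiset.eq_of_mem_replicate hx)
  have h1 : (Multiset.replicate n (1 : E)).filter (· ≠ 0) = Multiset.replicate n 1 :=
    Multiset.filter_eq_self.2 fun x hx => Multiset.eq_of_mem_replicate hx ▸ one_ne_zero
  have hcard := congrArg (fun m => (m.filter (· ≠ 0)).card) hroots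
  rw [Multiset.filter_map, Multiset.card_map, Multiset.filter_add, h0, h1] at hcard
  simpa using! hcard

theorem prod_powersetCard_append_one_zero (S : Type*) [CommRing S] (n : ℕ) :
    ∃ m, ∏ T ∈ Finset.powersetCard n Finset.univ, (X - C (∏ k ∈ T,
      (Fin.append (fun _ => 1) (fun _ => 0) : Fin (n + n) → S) k)) = (X - 1) * X ^ m := by
  let T₀ : Finset (Fin (n + n)) := Finset.univ.map (Fin.castAddEmb n)
  have hT₀ : T₀ ∈ Finset.powersetCard n Finset.univ := by simp [T₀, Finset.mem_powersetCard]
  rw [← Finset.mul_prod_erase _ _ hT₀]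
  refine ⟨_, congrArg₂ _ (by simp [T₀]) (Finset.prod_eq_pow_card fun T hT => ?_)⟩
  obtain ⟨hne, hT⟩ := Finset.mem_erase.1 hT
  obtain ⟨k, hk, hk₀⟩ : ∃ k ∈ T, k ∉ T₀ := by
    by_contra! hsub
    refine hne (Finset.eq_of_subset_of_card_le hsub ?_)
    simp [T₀, (Finset.mem_powersetCard.1 hT).2]
  rw [Finset.prod_eq_zero hk, C_0, sub_zero]
  induction k using Fin.addCases with
  | left i => simp [T₀] at hk₀
  | right i => exact Fin.append_right _ _ i

theorem card_filter_notMem_eq {I : Ideal R} {E : Type u} [CommRing E] {ψ : R →+* E} {f : R[X]}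
    {n : ℕ} (hf : f.map (Ideal.Quotient.mk I) = X ^ n * (X - 1) ^ n) {α : Fin (n + n) → E}
    (hα : f.map ψ = ∏ k, (X - C (α k))) {z : Ideal E} [z.IsPrime] (hz : I.map ψ ≤ z)
    [DecidablePred (α · ∉ z)] : (Finset.univ.filter (α · ∉ z)).card = n := by
  classical
  have hmod : ∏ k, (X - C (Ideal.Quotient.mk z (α k))) = X ^ n * (X - 1) ^ n := by
    have := congrArg (Polynomial.map
      (Ideal.quotientMap z ψ (Ideal.map_le_iff_le_comap.1 hz))) hf
    rw [Polynomial.map_map, Ideal.quotientMap_comp_mk, ← Polynomial.map_map, hα] at this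
    simpa [Polynomial.map_prod] using this
  simpa only [ne_eq, Ideal.Quotient.eq_zero_iff_mem] using card_filter_ne_zero_eq hmod

theorem exists_finset_forall_notMem_iff {I : Ideal R} [hR : HenselianRing R I] {E : Type u}
    [CommRing E] [IsDomain E] (ψ : R →+* E) {f : R[X]} {n : ℕ}
    (hf : f.map (Ideal.Quotient.mk I) = X ^ n * (X - 1) ^ n) {α : Fin (n + n) → E}
    (hα : f.map ψ = ∏ k, (X - C (α k))) :
    ∃ S : Finset (Fin (n + n)), ∀ z : Ideal E, z.IsPrime → I.map ψ ≤ z → ∀ j, α j ∉ z ↔ j ∈ S := by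
  classical
  obtain ⟨p, hpm, hp⟩ := exists_monic_map_eq_prod_powersetCard f (n + n) n
  obtain ⟨m, hm⟩ := prod_powersetCard_append_one_zero (R ⧸ I) n
  have hpI : p.map (Ideal.Quotient.mk I) = (X - 1) * X ^ m := by
    refine (hp _ _ (Fin.append (fun _ => 1) (fun _ => 0)) ?_).trans hm
    simp only [hf, Fin.prod_univ_add, Fin.append_left, Fin.append_right]
    simp [mul_comm]
  obtain ⟨r, hr, hr1⟩ := hR.is_henselian p hpm 1
    (by
      rw [← Ideal.Quotient.eq_zero_iff_mem, ← eval_map_apply, hpI]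
      simp)
    (by
      rw [← eval_map_apply, ← derivative_map, hpI]
      simp)
  obtain ⟨S, hS, hrS⟩ : ∃ S ∈ Finset.powersetCard n Finset.univ, ψ r = ∏ k ∈ S, α k := by
    have := hr.map (f := ψ)
    rw [hp _ ψ α hα, IsRoot.def, eval_prod, Finset.prod_eq_zero_iff] at this
    simpa only [eval_sub, eval_X, eval_C, sub_eq_zero] using this
  refine ⟨S, fun z hz hIz j => ?_⟩
  have hone : ∏ k ∈ S, α k - 1 ∈ z := by
    rw [← hrS, ← map_one ψ, ← map_sub]
    exact hIz (Ideal.mem_map_of_mem ψ hr1)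
  have hsub : S ⊆ Finset.univ.filter (α · ∉ z) := fun k hk =>
    Finset.mem_filter.2 ⟨Finset.mem_univ _, fun hkz => hz.one_notMem <|
      (z.sub_mem_iff_right (Ideal.mem_of_dvd _ (Finset.dvd_prod_of_mem α hk) hkz)).1 hone⟩
  rw [Finset.eq_of_subset_of_card_le hsub
    (by rw [card_filter_notMem_eq hf hα hIz, (Finset.mem_powersetCard.1 hS).2])]
  simp

theorem exists_isDomain_map_eq_prod {D : Type u} [CommRing D] [IsDomain D] {f : D[X]}
    (hf : f.Monic) {N : ℕ} (hN : f.natDegree = N) :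
    ∃ (E : Type u) (_ : CommRing E) (_ : IsDomain E) (_ : Algebra D E),
      Algebra.IsIntegral D E ∧ Function.Injective (algebraMap D E) ∧
        ∃ α : Fin N → E, f.map (algebraMap D E) = ∏ k, (X - C (α k)) := by
  obtain ⟨S, _, _, _, _, _, hS⟩ := hf.exists_splits_map
  obtain ⟨P, hP⟩ := PrimeSpectrum.comap_surjective_of_faithfullyFlat (A := D) (B := S) ⊥
  have hker : RingHom.ker (algebraMap D (S ⧸ P.asIdeal)) = ⊥ := by
    rw [IsScalarTower.algebraMap_eq D S, Ideal.Quotient.algebraMap_eq, ← RingHom.comap_ker,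
      Ideal.mk_ker]
    exact congrArg PrimeSpectrum.asIdeal hP
  have hsplit : (f.map (algebraMap D (S ⧸ P.asIdeal))).Splits := by
    rw [IsScalarTower.algebraMap_eq D S, ← Polynomial.map_map]
    exact hS.map _
  refine ⟨S ⧸ P.asIdeal, _, inferInstance, inferInstance, inferInstance,
    (RingHom.injective_iff_ker_eq_bot _).2 hker, ?_⟩
  rw [hsplit.eq_prod_roots_of_monic (hf.map _)]
  obtain ⟨l, hl⟩ := Quot.exists_rep (f.map (algebraMap D (S ⧸ P.asIdeal))).roots
  have hlN : N = l.length := by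
    rw [← hN, ← hf.natDegree_map (algebraMap D (S ⧸ P.asIdeal)), hsplit.natDegree_eq_card_roots,
      ← hl]
    rfl
  subst hlN
  refine ⟨l.get, ?_⟩
  rw [← hl, Finset.prod, ← Function.comp_def (fun t => X - C t) l.get, ← Multiset.map_map,
    Fin.univ_val_map, List.ofFn_get]
  rfl

theorem exists_monic_aeval_eq_zero_map_eq {I : Ideal R} [Nontrivial R] {D : Type u} [CommRing D]
    [Algebra R D] [Algebra.IsIntegral R D] {x : D} (hx : x ^ 2 - x ∈ I.map (algebraMap R D)) :
    ∃ (f : R[X]) (n : ℕ), f.Monic ∧ f.natDegree = n + n ∧ aeval x f = 0 ∧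
      f.map (Ideal.Quotient.mk I) = X ^ n * (X - 1) ^ n := by
  obtain ⟨p, hpm, hp0, hpI⟩ := exists_monic_aeval_eq_zero_forall_mem_of_mem_map hx
  have hpmap : p.map (Ideal.Quotient.mk I) = X ^ p.natDegree := by
    ext i
    by_cases hi : i = p.natDegree
    · simp [hi, hpm]
    · simp [coeff_X_pow, hi, Ideal.Quotient.eq_zero_iff_mem.2 (hpI i hi)]
  have hqd : (X ^ 2 - X : R[X]).natDegree = 2 := by
    compute_degree!
  have hqm : (X ^ 2 - X : R[X]).Monic := by
    monicity!
  refine ⟨p.comp (X ^ 2 - X), p.natDegree, hpm.comp hqm (by simp [hqd]), ?_, ?_, ?_⟩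
  · rw [natDegree_comp_eq_of_mul_ne_zero (by simp [hpm.leadingCoeff, hqm.leadingCoeff]), hqd,
      mul_two]
  · simp [aeval_comp, hp0]
  · rw [Polynomial.map_comp, hpmap, ← mul_pow]
    simp [mul_sub, sq]

/-- By integrality `x` is a root of some monic `f` with `f = Xⁿ(X - 1)ⁿ` modulo `I`, and which
roots of `f` vanish at a point over `I` does not depend on the point. -/
theorem forall_mem_or_forall_notMem_of_sq_sub_self_mem {I : Ideal R} [HenselianRing R I]
    {D : Type u} [CommRing D] [IsDomain D] [Algebra R D] [Algebra.IsIntegral R D] {x : D}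
    (hx : x ^ 2 - x ∈ I.map (algebraMap R D)) :
    (∀ z : Ideal D, z.IsPrime → I.map (algebraMap R D) ≤ z → x ∈ z) ∨
      ∀ z : Ideal D, z.IsPrime → I.map (algebraMap R D) ≤ z → x ∉ z := by
  have : Nontrivial R := (algebraMap R D).domain_nontrivial
  obtain ⟨f, n, hfm, hfd, hfx, hfmap⟩ := exists_monic_aeval_eq_zero_map_eq hx
  obtain ⟨E, _, _, _, _, hinj, α, hα⟩ := exists_isDomain_map_eq_prod
    (hfm.map (algebraMap R D)) ((hfm.natDegree_map _).trans hfd)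
  rw [Polynomial.map_map] at hα
  obtain ⟨S, hS⟩ := exists_finset_forall_notMem_iff _ hfmap hα
  obtain ⟨j, hj⟩ : ∃ j, algebraMap D E x = α j := by
    have hfx : eval (algebraMap D E x) (f.map ((algebraMap D E).comp (algebraMap R D))) = 0 := by
      rw [← Polynomial.map_map, eval_map_apply, eval_map_algebraMap, hfx, map_zero]
    rw [hα, eval_prod, Finset.prod_eq_zero_iff] at hfx
    simpa [sub_eq_zero] using hfx
  have hiff (z : Ideal D) (_ : z.IsPrime) (hz : I.map (algebraMap R D) ≤ z) : x ∉ z ↔ j ∈ S := by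
    obtain ⟨z', hz', rfl⟩ := Ideal.exists_ideal_over_prime_of_isIntegral_of_isDomain (S := E) z
      (by simp [(RingHom.injective_iff_ker_eq_bot _).1 hinj])
    rw [← hS z' hz' (by rwa [← Ideal.map_map, Ideal.map_le_iff_le_comap]) j, ← hj]
    rfl
  by_cases hjS : j ∈ S
  · exact Or.inr fun z hz hI => (hiff z hz hI).2 hjS
  · exact Or.inl fun z hz hI => not_not.1 fun h => hjS ((hiff z hz hI).1 h)

theorem preconnectedSpace_primeSpectrum_quotient_map (I : Ideal R) [HenselianRing R I]
    (D : Type u) [CommRing D] [IsDomain D] [Algebra R D] [Algebra.IsIntegral R D] :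
    PreconnectedSpace (PrimeSpectrum (D ⧸ I.map (algebraMap R D))) := by
  refine preconnectedSpace_iff_clopen.2 fun s hs => ?_
  obtain ⟨e, he, rfl⟩ := PrimeSpectrum.exists_idempotent_basicOpen_eq_of_isClopen hs
  obtain ⟨x, rfl⟩ := Ideal.Quotient.mk_surjective e
  have hx : x ^ 2 - x ∈ I.map (algebraMap R D) := by
    rw [← Ideal.Quotient.eq_zero_iff_mem, map_sub, map_pow, sq, he.eq, sub_self]
  have hle (z : PrimeSpectrum (D ⧸ I.map (algebraMap R D))) :
      I.map (algebraMap R D) ≤ z.asIdeal.comap (Ideal.Quotient.mk _) :=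
    Ideal.mk_ker.symm.trans_le (Ideal.ker_le_comap _)
  refine (forall_mem_or_forall_notMem_of_sq_sub_self_mem hx).imp (fun h => ?_) fun h => ?_
  · exact Set.eq_empty_of_forall_notMem fun z hz => hz (h _ inferInstance (hle z))
  · exact Set.eq_univ_of_forall fun z => h _ inferInstance (hle z)

theorem isPreconnected_zeroLocus_sup_map (I : Ideal R) [HenselianRing R I] {S : Type u}
    [CommRing S] [Algebra R S] [Algebra.IsIntegral R S] (𝔭 : Ideal S) [𝔭.IsPrime] :
    IsPreconnected (PrimeSpectrum.zeroLocus (𝔭 ⊔ I.map (algebraMap R S) : Ideal S).carrier) := by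
  let φ := (Ideal.Quotient.mk (I.map (algebraMap R (S ⧸ 𝔭)))).comp (Ideal.Quotient.mk 𝔭)
  have hφ : Function.Surjective φ :=
    Ideal.Quotient.mk_surjective.comp Ideal.Quotient.mk_surjective
  have hker : RingHom.ker φ = 𝔭 ⊔ I.map (algebraMap R S) := by
    rw [← RingHom.comap_ker, Ideal.mk_ker, IsScalarTower.algebraMap_eq R S, ← Ideal.map_map,
      Ideal.Quotient.algebraMap_eq, Ideal.comap_map_of_surjective _
      Ideal.Quotient.mk_surjective, ← RingHom.ker_eq_comap_bot, Ideal.mk_ker, sup_comm]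
  have := preconnectedSpace_primeSpectrum_quotient_map I (S ⧸ 𝔭)
  rw [← hker]
  exact range_comap_of_surjective _ φ hφ ▸
    isPreconnected_range (PrimeSpectrum.continuous_comap φ)

end Roots

section Connected

variable {S : Type u} [CommRing S] {I : Ideal S} {ι : Type*} {w a : ι → S}

theorem exists_notMem_mul_sub_eq_zero_trans {𝔭 : Ideal S} [𝔭.IsPrime] {w₁ w₂ w₃ a₁ a₂ a₃ : S}
    (hw : w₂ ∉ 𝔭) (h12 : ∃ h ∉ 𝔭, h * (a₁ * w₂ - a₂ * w₁) = 0)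
    (h23 : ∃ h ∉ 𝔭, h * (a₂ * w₃ - a₃ * w₂) = 0) : ∃ h ∉ 𝔭, h * (a₁ * w₃ - a₃ * w₁) = 0 := by
  obtain ⟨h, hh, h12⟩ := h12
  obtain ⟨h', hh', h23⟩ := h23
  refine ⟨h * h' * w₂, 𝔭.primeCompl.mul_mem (𝔭.primeCompl.mul_mem hh hh') hw, ?_⟩
  linear_combination h' * w₃ * h12 + h * w₁ * h23

theorem exists_notMem_mul_sub_eq_zero_of_isPreconnected {𝔭 : Ideal S} [𝔭.IsPrime]
    (hconn : IsPreconnected (PrimeSpectrum.zeroLocus (𝔭 ⊔ I : Ideal S).carrier))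
    (hw : Ideal.span (Set.range w) = ⊤)
    (ha : ∀ j k (z : Ideal S), z.IsPrime → I ≤ z → w j ∉ z → w k ∉ z →
      ∃ h ∉ z, h * (a j * w k - a k * w j) = 0)
    {j k : ι} {z z' : PrimeSpectrum S} (hz : 𝔭 ⊔ I ≤ z.asIdeal) (hz' : 𝔭 ⊔ I ≤ z'.asIdeal)
    (hj : w j ∉ z.asIdeal) (hk : w k ∉ z'.asIdeal) :
    ∃ h ∉ 𝔭, h * (a k * w j - a j * w k) = 0 := by
  by_contra hkj
  let E (l : ι) : Prop := ∃ h ∉ 𝔭, h * (a l * w j - a j * w l) = 0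
  let U (p : ι → Prop) : Set (PrimeSpectrum S) := ⋃ l : {l // p l}, PrimeSpectrum.basicOpen (w l)
  have hU (p) : IsOpen (U p) := isOpen_iUnion fun l => PrimeSpectrum.isOpen_basicOpen
  obtain ⟨y, hy, hyE, hyE'⟩ := hconn (U E) (U (¬ E ·)) (hU _) (hU _)
    (fun y _ => by
      obtain ⟨l, hl⟩ := exists_notMem_of_span_range_eq_top hw y.2.ne_top
      by_cases hlE : E l
      · exact Or.inl (Set.mem_iUnion.2 ⟨⟨l, hlE⟩, hl⟩)
      · exact Or.inr (Set.mem_iUnion.2 ⟨⟨l, hlE⟩, hl⟩))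
    ⟨z, hz, Set.mem_iUnion.2 ⟨⟨j, 1, ‹𝔭.IsPrime›.one_notMem, by ring⟩, hj⟩⟩
    ⟨z', hz', Set.mem_iUnion.2 ⟨⟨k, hkj⟩, hk⟩⟩
  replace hy : 𝔭 ⊔ I ≤ y.asIdeal := hy
  obtain ⟨⟨l, hl⟩, hyl⟩ := Set.mem_iUnion.1 hyE
  obtain ⟨⟨l', hl'⟩, hyl'⟩ := Set.mem_iUnion.1 hyE'
  obtain ⟨h, hh, hll'⟩ := ha l' l y.asIdeal y.2 (le_sup_right.trans hy) hyl' hyl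
  exact hl' (exists_notMem_mul_sub_eq_zero_trans (fun hmem => hyl (hy (Ideal.mem_sup_left hmem)))
    ⟨h, fun hmem => hh (hy (Ideal.mem_sup_left hmem)), hll'⟩ hl)

/-- Otherwise some prime `𝔭 ≥ Ann (aⱼwₖ - aₖwⱼ)` specializes both to `z` and to a point of
`V(I)` where `wₖ` is invertible, and connectedness of `V(𝔭 + I)` gives a contradiction. -/
theorem exists_notMem_exists_mul_mul_sub_eq_zero
    (hconn : ∀ 𝔭 : Ideal S, 𝔭.IsPrime →
      IsPreconnected (PrimeSpectrum.zeroLocus (𝔭 ⊔ I : Ideal S).carrier))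
    (hw : Ideal.span (Set.range w) = ⊤)
    (ha : ∀ j k (z : Ideal S), z.IsPrime → I ≤ z → w j ∉ z → w k ∉ z →
      ∃ h ∉ z, h * (a j * w k - a k * w j) = 0)
    {j : ι} {z : Ideal S} [hz : z.IsPrime] (hIz : I ≤ z) (hj : w j ∉ z) (k : ι) :
    ∃ h ∉ z, ∃ σ n, σ - w k ^ n ∈ I ∧ h * σ * (a k * w j - a j * w k) = 0 := by
  let M := (Submonoid.powers (Ideal.Quotient.mk I (w k))).comap (Ideal.Quotient.mk I)
  let d := a k * w j - a j * w k
  by_contra! hne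
  have hdisj : Disjoint ((Ideal.span {d}).annihilator : Set S) ↑(z.primeCompl ⊔ M) := by
    refine Set.disjoint_left.2 fun x hx hxM => ?_
    obtain ⟨h, hh, σ, ⟨n, hn⟩, rfl⟩ := Submonoid.mem_sup.1 hxM
    refine hne h hh σ n ?_ (by simpa using (Submodule.mem_annihilator_span_singleton _ _).1 hx)
    rw [← Ideal.Quotient.eq, ← hn, map_pow]
  obtain ⟨𝔭, h𝔭, hd𝔭, hM𝔭⟩ := Ideal.exists_le_prime_disjoint _ _ hdisj
  have h𝔭z : 𝔭 ≤ z := fun x hx => by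
    by_contra hxz
    exact Set.disjoint_left.1 hM𝔭 hx (Submonoid.mem_sup_left hxz)
  obtain ⟨z', hz', h𝔭z', hkz'⟩ : ∃ z' : Ideal S, z'.IsPrime ∧ 𝔭 ⊔ I ≤ z' ∧ w k ∉ z' := by
    obtain ⟨z', hz', hle, hdisj⟩ := Ideal.exists_le_prime_disjoint (𝔭 ⊔ I) (.powers (w k)) (by
      refine Set.disjoint_left.2 fun x hx ⟨n, hn⟩ => ?_
      obtain ⟨p, hp, i, hi, rfl⟩ := Submodule.mem_sup.1 hx
      refine Set.disjoint_left.1 hM𝔭 hp (Submonoid.mem_sup_right ⟨n, ?_⟩)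
      simp only [← map_pow]
      rw [Ideal.Quotient.eq, show w k ^ n = p + i from hn, add_sub_cancel_left]
      exact hi)
    exact ⟨z', hz', hle, fun hk => Set.disjoint_left.1 hdisj hk (Submonoid.mem_powers _)⟩
  obtain ⟨h, hh, hd⟩ := exists_notMem_mul_sub_eq_zero_of_isPreconnected (z := ⟨z, hz⟩)
    (z' := ⟨z', hz'⟩) (hconn 𝔭 h𝔭) hw ha (sup_le h𝔭z hIz) h𝔭z' hj hkz'
  exact hh (hd𝔭 ((Submodule.mem_annihilator_span_singleton _ _).2 hd))

/-- The `h` for which `h · (aₖ / wₖ)ₖ` glues form an ideal contained in no maximal ideal. -/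
theorem exists_forall_exists_notMem_mul_sub_eq_zero [Finite ι] (hI : I ≤ Ideal.jacobson ⊥)
    (hconn : ∀ 𝔭 : Ideal S, 𝔭.IsPrime →
      IsPreconnected (PrimeSpectrum.zeroLocus (𝔭 ⊔ I : Ideal S).carrier))
    (hw : Ideal.span (Set.range w) = ⊤)
    (ha : ∀ j k (z : Ideal S), z.IsPrime → I ≤ z → w j ∉ z → w k ∉ z →
      ∃ h ∉ z, h * (a j * w k - a k * w j) = 0) :
    ∃ b, ∀ k (z : Ideal S), z.IsPrime → I ≤ z → w k ∉ z → ∃ h ∉ z, h * (a k - b * w k) = 0 := by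
  let N : Ideal S :=
    { carrier := {s | ∃ b, ∀ k (z : Ideal S), z.IsPrime → I ≤ z → w k ∉ z →
        ∃ h ∉ z, h * (s * a k - b * w k) = 0}
      zero_mem' := ⟨0, fun k z hz _ _ => ⟨1, hz.one_notMem, by ring⟩⟩
      add_mem' := fun {s s'} ⟨b, hb⟩ ⟨b', hb'⟩ => ⟨b + b', fun k z hz hIz hk => by
        obtain ⟨h, hh, e⟩ := hb k z hz hIz hk
        obtain ⟨h', hh', e'⟩ := hb' k z hz hIz hk
        exact ⟨h * h', z.primeCompl.mul_mem hh hh', by linear_combination h' * e + h * e'⟩⟩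
      smul_mem' := fun r s ⟨b, hb⟩ => ⟨r * b, fun k z hz hIz hk => by
        obtain ⟨h, hh, e⟩ := hb k z hz hIz hk
        exact ⟨h, hh, by simp only [smul_eq_mul]; linear_combination r * e⟩⟩ }
  have hN : N = ⊤ := by
    by_contra hne
    obtain ⟨z, hz, hNz⟩ := Ideal.exists_le_maximal N hne
    have hIz : I ≤ z := hI.trans (sInf_le ⟨bot_le, hz⟩)
    obtain ⟨j, hj⟩ := exists_notMem_of_span_range_eq_top hw hz.ne_top
    choose h hh σ n hσ e using exists_notMem_exists_mul_mul_sub_eq_zero hconn hw ha hIz hj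
    have := Fintype.ofFinite ι
    refine z.primeCompl.mul_mem (z.primeCompl.prod_mem fun k (_ : k ∈ Finset.univ) => hh k) hj
      (hNz ⟨(∏ k, h k) * a j, fun k z' hz' hIz' hk => ⟨σ k, fun hmem => ?_, ?_⟩⟩)
    · exact hk (hz'.mem_of_pow_mem (n k) ((z'.sub_mem_iff_right hmem).1 (hIz' (hσ k))))
    · obtain ⟨c, hc⟩ := Finset.dvd_prod_of_mem h (Finset.mem_univ k)
      rw [hc]
      linear_combination c * e k
  obtain ⟨b, hb⟩ : (1 : S) ∈ N := hN ▸ Submodule.mem_top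
  exact ⟨b, by simpa only [one_mul] using hb⟩

end Connected

section LocalTests

variable {R D T : Type u} [CommRing R] [CommRing D] [CommRing T]

/-- A map `t` from `D` to a Henselian pair `(T, J)` that factors through the local ring of `D` at
the prime `z` and sends `z` into `J`. Equations in `D` near `z` can be checked on these maps. -/
structure IsHenselianTest (z : Ideal D) (J : Ideal T) (t : D →+* T) : Prop where
  henselian : HenselianRing T J
  map_le : z.map t ≤ J
  isUnit {s : D} : s ∉ z → IsUnit (t s)

theorem IsHenselianTest.comp {z : Ideal D} {J : Ideal T} {t : D →+* T}
    (h : IsHenselianTest z J t) (f : R →+* D) : IsHenselianTest (z.comap f) J (t.comp f) where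
  henselian := h.henselian
  map_le := by
    rw [← Ideal.map_map]
    exact (Ideal.map_mono Ideal.map_comap_le).trans h.map_le
  isUnit hs := h.isUnit hs

theorem exists_notMem_mul_eq_zero_of_forall_isHenselianTest {z : Ideal D} [z.IsPrime] {d : D}
    (hd : ∀ (T : Type u) [CommRing T] (J : Ideal T) (t : D →+* T),
      IsHenselianTest z J t → t d = 0) :
    ∃ s ∉ z, s * d = 0 := by
  let m := IsLocalRing.maximalIdeal (Localization.AtPrime z)
  obtain ⟨H, _, ρ, hρ, -⟩ := exists_isHenselizationAway m 1
  have htest : IsHenselianTest z (m.map ρ) (ρ.comp (algebraMap D _)) :=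
    { henselian := hρ.1
      map_le := by rw [← Ideal.map_map, Localization.AtPrime.map_eq_maximalIdeal]
      isUnit := fun hs => (IsLocalization.map_units _ (⟨_, hs⟩ : z.primeCompl)).map ρ }
  obtain ⟨s, hs, hsd⟩ := hρ.exists_notMem_mul_eq_zero m le_rfl
    (Ideal.IsPrime.one_notMem inferInstance) (hd H _ _ htest)
  rw [(IsLocalRing.notMem_maximalIdeal.1 hs).mul_right_eq_zero] at hsd
  obtain ⟨⟨s, hs⟩, hsd⟩ := (IsLocalization.map_eq_zero_iff z.primeCompl _ d).1 hsd
  exact ⟨s, hs, hsd⟩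

theorem map_le_jacobson_bot_of_isIntegral [Algebra R D] [Algebra.IsIntegral R D] {I : Ideal R}
    (hI : I ≤ Ideal.jacobson ⊥) : I.map (algebraMap R D) ≤ Ideal.jacobson ⊥ :=
  le_sInf fun z ⟨_, _⟩ => Ideal.map_le_iff_le_comap.2
    (hI.trans (sInf_le ⟨bot_le, Ideal.isMaximal_comap_of_isIntegral_of_isMaximal z⟩))

theorem eq_zero_of_forall_isHenselianTest {I : Ideal D} (hI : I ≤ Ideal.jacobson ⊥) {d : D}
    (hd : ∀ (z : Ideal D), z.IsPrime → I ≤ z → ∀ (T : Type u) [CommRing T] (J : Ideal T)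
      (t : D →+* T), IsHenselianTest z J t → t d = 0) : d = 0 := by
  rw [← one_smul D d, ← Submodule.mem_annihilator_span_singleton, ← Ideal.eq_top_iff_one]
  by_contra hne
  obtain ⟨z, hz, hle⟩ := Ideal.exists_le_maximal _ hne
  obtain ⟨s, hs, hsd⟩ := exists_notMem_mul_eq_zero_of_forall_isHenselianTest
    (hd z hz.isPrime (hI.trans (sInf_le ⟨bot_le, hz⟩)))
  exact hs (hle ((Submodule.mem_annihilator_span_singleton _ _).2 hsd))

end LocalTests

section Charts

variable {R Q : Type u} [CommRing R] [CommRing Q]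

/-- Near the points where `f` is invertible, `Q` is standard étale over `R` with coordinate `x`
a root of `F` at which `G` is invertible, and `y` is given there by the formula `P(x) / G(x)`. -/
structure IsStandardChart (q : R →+* Q) (y f : Q) (F G P : R[X]) : Prop where
  monic : F.Monic
  exists_root {κ : Type u} [Field κ] (φ : Q →+* κ) : φ f ≠ 0 →
    ∃ x, F.eval₂ (φ.comp q) x = 0 ∧ G.eval₂ (φ.comp q) x ≠ 0
  exists_lift {T : Type u} [CommRing T] (t : R →+* T) (α : T) : F.eval₂ t α = 0 →
    IsUnit (G.eval₂ t α) → ∃ u : Q →+* T, u.comp q = t ∧ P.eval₂ t α = G.eval₂ t α * u y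

theorem exists_isStandardChart {q : R →+* Q} (hq : q.Etale) (y : Q) (z : Ideal Q) [z.IsPrime] :
    ∃ f ∉ z, ∃ F G P, IsStandardChart q y f F G P := by
  algebraize [q]
  obtain ⟨f, hf, hstd⟩ := Algebra.IsEtaleAt.exists_isStandardEtale (R := R) z
  obtain ⟨⟨S⟩⟩ := hstd
  obtain ⟨p, n, hp⟩ := S.exists_mul_aeval_x_g_pow_eq_aeval_x (algebraMap Q (Localization.Away f) y)
  refine ⟨f, hf, S.f, S.g ^ (n + 1), p * S.g, S.monic_f, @fun κ _ φ hφ => ?_,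
    @fun T _ t α hα hg => ?_⟩
  · let := (φ.comp q).toAlgebra
    let ψ : Localization.Away f →+* κ := IsLocalization.Away.lift f (isUnit_iff_ne_zero.2 hφ)
    let ψ' : Localization.Away f →ₐ[R] κ :=
      { ψ with commutes' := fun r => IsLocalization.Away.lift_eq f _ (q r) }
    have hx := S.hasMap.map ψ'
    refine ⟨ψ' S.x, hx.1, ?_⟩
    rw [eval₂_pow]
    exact pow_ne_zero _ hx.2.ne_zero
  · let := t.toAlgebra
    rw [eval₂_pow, isUnit_pow_succ_iff] at hg
    let u : Localization.Away f →ₐ[R] T := (S.P.lift α ⟨hα, hg⟩).comp S.equivRing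
    have hu : u S.x = α := by
      simpa [u] using S.P.lift_X α ⟨hα, hg⟩
    refine ⟨u.toRingHom.comp (algebraMap Q _), RingHom.ext fun r => u.commutes r, ?_⟩
    have hp' := congr(u $hp)
    simp only [map_mul, map_pow, ← aeval_algHom_apply, hu] at hp'
    rw [eval₂_mul, eval₂_pow, pow_succ, mul_right_comm]
    exact congrArg (· * _) (hp'.symm.trans (mul_comm _ _))

end Charts

section Splitting

variable {R : Type u} [CommRing R]

theorem exists_finite_faithfullyFlat_forall_splits {s : Finset R[X]} (hs : ∀ F ∈ s, F.Monic) :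
    ∃ (S : Type u) (_ : CommRing S) (_ : Algebra R S), Module.Finite R S ∧
      Module.FaithfullyFlat R S ∧ ∀ F ∈ s, (F.map (algebraMap R S)).Splits := by
  classical
  induction s using Finset.induction_on with
  | empty => exact ⟨R, _, inferInstance, inferInstance, inferInstance, by simp⟩
  | insert F s _ ih =>
    obtain ⟨hF, hs⟩ := (Finset.forall_mem_insert _ _ _).1 hs
    obtain ⟨S, _, _, _, _, hS⟩ := ih hs
    obtain ⟨S', _, _, _, _, hS'⟩ : ∃ (S' : Type u) (_ : CommRing S') (_ : Algebra S S'),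
        Module.Finite S S' ∧ Module.FaithfullyFlat S S' ∧
          ((F.map (algebraMap R S)).map (algebraMap S S')).Splits := by
      rcases subsingleton_or_nontrivial S with _ | _
      · exact ⟨S, _, inferInstance, inferInstance, inferInstance, by
          simp [Subsingleton.elim _ (1 : S[X])]⟩
      · obtain ⟨S', _, _, _, _, _, h⟩ := (hF.map (algebraMap R S)).exists_splits_map
        exact ⟨S', _, inferInstance, inferInstance, inferInstance, h⟩
    algebraize [(algebraMap S S').comp (algebraMap R S)]
    refine ⟨S', _, inferInstance, .trans S S', .trans R S S', ?_⟩
    rw [Finset.forall_mem_insert]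
    exact ⟨by rwa [Polynomial.map_map] at hS', fun G hG =>
      Polynomial.map_map (algebraMap R S) (algebraMap S S') G ▸ (hS G hG).map _⟩

theorem exists_root_of_splits {S κ : Type*} [CommRing S] [Field κ] {F : S[X]} (hF : F.Monic)
    (hs : F.Splits) {f : S →+* κ} {x : κ} (hx : F.eval₂ f x = 0) :
    ∃ α, F.eval α = 0 ∧ f α = x := by
  obtain ⟨m, hm⟩ := splits_iff_exists_multiset.1 hs
  rw [hF.leadingCoeff, C_1, one_mul] at hm
  rw [hm, ← coe_eval₂RingHom, map_multiset_prod, Multiset.prod_eq_zero_iff] at hx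
  simp only [Multiset.map_map, Multiset.mem_map, Function.comp_apply] at hx
  obtain ⟨α, hα, h0⟩ := hx
  refine ⟨α, ?_, ?_⟩
  · exact dvd_iff_isRoot.1 (hm ▸ Multiset.dvd_prod (Multiset.mem_map_of_mem _ hα))
  · rw [coe_eval₂RingHom, eval₂_sub, eval₂_X, eval₂_C, sub_eq_zero] at h0
    exact h0.symm

end Splitting

section Gluing

theorem exists_finset_forall_exists_isStandardChart {R Q : Type u} [CommRing R] [CommRing Q]
    {q : R →+* Q} (hq : q.Etale) (y : Q) :
    ∃ s : Finset R[X], (∀ F ∈ s, F.Monic) ∧ ∀ (κ : Type u) [Field κ] (φ : Q →+* κ),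
      ∃ F ∈ s, ∃ f G P, φ f ≠ 0 ∧ IsStandardChart q y f F G P := by
  classical
  choose f hf F G P h using fun z : PrimeSpectrum Q => exists_isStandardChart hq y z.asIdeal
  have hspan : Ideal.span (Set.range f) = ⊤ := by
    by_contra hne
    obtain ⟨m, hm, hle⟩ := Ideal.exists_le_maximal _ hne
    exact hf ⟨m, hm.isPrime⟩ (hle (Ideal.subset_span ⟨_, rfl⟩))
  obtain ⟨s, hs, hs1⟩ := (Ideal.span_eq_top_iff_finite _).1 hspan
  choose z hz using fun x : s => hs x.2
  refine ⟨Finset.univ.image fun x => F (z x), ?_, fun κ _ φ => ?_⟩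
  · exact Finset.forall_mem_image.2 fun x _ => (h (z x)).monic
  · by_contra! hall
    refine RingHom.ker_ne_top φ (top_le_iff.1 (hs1 ▸ Ideal.span_le.2 fun x hx => ?_))
    by_contra hφ
    refine hall _ (Finset.mem_image_of_mem _ (Finset.mem_univ ⟨x, hx⟩)) _ _ _ ?_ (h (z ⟨x, hx⟩))
    rwa [hz]

variable {R : Type u} [CommRing R] {I : Ideal R} {ι : Type*} {g : ι → R}
  {H : ι → Type u} [∀ i, CommRing (H i)] {ρ : ∀ i, R →+* H i} {c : ∀ i, H i}

/-- `v` is the value at the point `t : R →+* T` of the section given by `c i` on the chart `H i`,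
for some chart through which `t` factors. -/
def IsLocalValue (ρ : ∀ i, R →+* H i) (c : ∀ i, H i) {T : Type u} [CommRing T] (t : R →+* T)
    (v : T) : Prop :=
  ∃ i, ∃ u : H i →+* T, u.comp (ρ i) = t ∧ u (c i) = v

/-- The sections `c i` over the charts `H i` agree at all points with values in Henselian pairs. -/
def IsCompatibleFamily (I : Ideal R) (ρ : ∀ i, R →+* H i) (c : ∀ i, H i) : Prop :=
  ∀ (T : Type u) [CommRing T] (J : Ideal T), HenselianRing T J → ∀ t : R →+* T, I.map t ≤ J →
    ∀ v v', IsLocalValue ρ c t v → IsLocalValue ρ c t v' → v = v'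

theorem IsHenselizationAway.exists_extension {g : R} {H Q T : Type u} [CommRing H] [CommRing Q]
    [CommRing T] {ρ : R →+* H} {q : R →+* Q} {φ : Q →+* H} (h : IsHenselizationAway I g ρ)
    (hq : IsHenselEquivAway I g q) (hφ : φ.comp q = ρ) {J : Ideal T} (hJ : HenselianRing T J)
    {u : Q →+* T} (hu : I.map (u.comp q) ≤ J) : ∃ u' : H →+* T, u'.comp φ = u :=
  ((hq.of_comp (hφ ▸ h.2)).2 T J hJ u (by rwa [Ideal.map_map]) (by simp)).exists

theorem exists_isLocalValue_of_isStandardChart {i : ι} {S Q : Type u} [CommRing S] [Algebra R S]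
    [CommRing Q] {q : R →+* Q} {φ : Q →+* H i} {y f : Q} {F G P : R[X]}
    (hρ : IsHenselizationAway I (g i) (ρ i))
    (hq : IsHenselEquivAway I (g i) q) (hφ : φ.comp q = ρ i) (hy : φ y = c i)
    (hF : IsStandardChart q y f F G P) {α : S} (hα : F.eval₂ (algebraMap R S) α = 0)
    {T : Type u} [CommRing T] {J : Ideal T} (hJ : HenselianRing T J) {t : S →+* T}
    (ht : I.map (t.comp (algebraMap R S)) ≤ J) (hG : IsUnit (t (G.eval₂ (algebraMap R S) α))) :
    ∃ v, IsLocalValue ρ c (t.comp (algebraMap R S)) v ∧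
      t (P.eval₂ (algebraMap R S) α) = t (G.eval₂ (algebraMap R S) α) * v := by
  simp only [hom_eval₂] at hG ⊢
  obtain ⟨u, hu, hP⟩ := hF.exists_lift _ (t α) (by rw [← hom_eval₂, hα, map_zero]) hG
  obtain ⟨u', hu'⟩ := hρ.exists_extension hq hφ hJ (hu ▸ ht)
  refine ⟨u y, ⟨i, u', ?_, ?_⟩, hP⟩
  · rw [← hφ, ← RingHom.comp_assoc, hu', hu]
  · rw [← hy, ← hu', RingHom.comp_apply]

theorem exists_finite_faithfullyFlat_exists_isLocalValue [Finite ι]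
    (hg : Ideal.span (Set.range g) = ⊤) (hρ : ∀ i, IsHenselizationAway I (g i) (ρ i)) :
    ∃ (S : Type u) (_ : CommRing S) (_ : Algebra R S), Module.Finite R S ∧
      Module.FaithfullyFlat R S ∧ ∀ z : Ideal S, z.IsPrime → I.map (algebraMap R S) ≤ z →
        ∃ w ∉ z, ∃ a, ∀ (T : Type u) [CommRing T] (J : Ideal T), HenselianRing T J →
          ∀ t : S →+* T, I.map (t.comp (algebraMap R S)) ≤ J → IsUnit (t w) →
            ∃ v, IsLocalValue ρ c (t.comp (algebraMap R S)) v ∧ t a = t w * v := by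
  classical
  have := Fintype.ofFinite ι
  choose Q _ q φ hq hφ y hy using fun i => (hρ i).exists_etaleNhd fun _ : Fin 1 => c i
  choose s hmonic hs using fun i => exists_finset_forall_exists_isStandardChart (hq i).etale (y i 0)
  obtain ⟨S, _, _, hfin, hflat, hS⟩ :=
    exists_finite_faithfullyFlat_forall_splits (s := Finset.univ.biUnion s)
      (by simpa using fun F i => hmonic i F)
  refine ⟨S, _, _, hfin, hflat, fun z _ hz => ?_⟩
  let κ : S →+* z.ResidueField := algebraMap S z.ResidueField
  have hκ : I ≤ RingHom.ker (κ.comp (algebraMap R S)) := fun x hx => by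
    simpa [κ] using hz (Ideal.mem_map_of_mem _ hx)
  obtain ⟨i, hi⟩ := exists_notMem_of_span_range_eq_top hg
    (z := RingHom.ker (κ.comp (algebraMap R S))) (RingHom.ker_ne_top _)
  obtain ⟨ψ, hψ⟩ := (hq i).henselEquiv.exists_comp_eq_of_field hκ hi
  obtain ⟨F, hF, f, G, P, hf, hchart⟩ := hs i _ ψ
  obtain ⟨x, hx, hGx⟩ := hchart.exists_root ψ hf
  rw [hψ] at hx hGx
  obtain ⟨α, hα, rfl⟩ := exists_root_of_splits (hchart.monic.map (algebraMap R S))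
    (hS F (Finset.mem_biUnion.2 ⟨i, Finset.mem_univ i, hF⟩)) (by rwa [eval₂_map])
  rw [eval_map] at hα
  refine ⟨G.eval₂ (algebraMap R S) α, fun hmem => hGx ?_, P.eval₂ (algebraMap R S) α,
    fun T _ J hJ t ht hG => exists_isLocalValue_of_isStandardChart (hρ i) (hq i).henselEquiv
      (hφ i) congr($(hy i) 0) hchart hα hJ ht hG⟩
  rw [← hom_eval₂]
  simpa [κ] using hmem

theorem IsHenselianTest.map_comp_le {S T : Type u} [CommRing S] [CommRing T] {j : R →+* S}
    {z : Ideal S} (hz : I.map j ≤ z) {J : Ideal T} {t : S →+* T} (h : IsHenselianTest z J t) :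
    I.map (t.comp j) ≤ J := by
  rw [← Ideal.map_map]
  exact (Ideal.map_mono hz).trans h.map_le

/-- `b` represents the pullback along `j` of the section given by the `c i`, near the closed subset
cut out by `I`. -/
def IsPullbackSection (I : Ideal R) (ρ : ∀ i, R →+* H i) (c : ∀ i, H i) {S : Type u} [CommRing S]
    (j : R →+* S) (b : S) : Prop :=
  ∀ z : Ideal S, z.IsPrime → I.map j ≤ z → ∀ (T : Type u) [CommRing T] (J : Ideal T)
    (t : S →+* T), IsHenselianTest z J t → IsLocalValue ρ c (t.comp j) (t b)

namespace IsPullbackSection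

variable {S D : Type u} [CommRing S] [CommRing D] {j : R →+* S}

theorem of_chart {i : ι} {u : H i →+* S} (hu : u.comp (ρ i) = j) :
    IsPullbackSection I ρ c j (u (c i)) :=
  fun _ _ _ _ _ _ t _ => ⟨i, t.comp u, by rw [RingHom.comp_assoc, hu], rfl⟩

theorem map {b : S} (hb : IsPullbackSection I ρ c j b) (f : S →+* D) :
    IsPullbackSection I ρ c (f.comp j) (f b) :=
  fun z _ hz T _ J t ht => hb (z.comap f) inferInstance
    (Ideal.map_le_iff_le_comap.1 (by rwa [Ideal.map_map])) T J (t.comp f) (ht.comp f)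

theorem map_algHom [Algebra R S] [Algebra R D] {b : S}
    (hb : IsPullbackSection I ρ c (algebraMap R S) b) (f : S →ₐ[R] D) :
    IsPullbackSection I ρ c (algebraMap R D) (f b) :=
  f.comp_algebraMap ▸ hb.map f.toRingHom

theorem ext (hc : IsCompatibleFamily I ρ c) (hI : I.map j ≤ Ideal.jacobson ⊥) {b b' : S}
    (hb : IsPullbackSection I ρ c j b) (hb' : IsPullbackSection I ρ c j b') : b = b' :=
  sub_eq_zero.1 <| eq_zero_of_forall_isHenselianTest hI fun z hz hIz T _ J t ht => by
    rw [map_sub, sub_eq_zero]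
    exact hc T J ht.henselian _ (ht.map_comp_le hIz) _ _ (hb z hz hIz T J t ht)
      (hb' z hz hIz T J t ht)

end IsPullbackSection

theorem exists_isPullbackSection_of_isIntegral [HenselianRing R I]
    (hc : IsCompatibleFamily I ρ c) {S : Type u} [CommRing S] [Algebra R S]
    [Algebra.IsIntegral R S] (hS : ∀ z : Ideal S, z.IsPrime → I.map (algebraMap R S) ≤ z →
      ∃ w ∉ z, ∃ a, ∀ (T : Type u) [CommRing T] (J : Ideal T), HenselianRing T J →
        ∀ t : S →+* T, I.map (t.comp (algebraMap R S)) ≤ J → IsUnit (t w) →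
          ∃ v, IsLocalValue ρ c (t.comp (algebraMap R S)) v ∧ t a = t w * v) :
    ∃ b : S, IsPullbackSection I ρ c (algebraMap R S) b := by
  have hjac := map_le_jacobson_bot_of_isIntegral (D := S) (HenselianRing.jac (I := I))
  choose w hw a ha using fun m : MaximalSpectrum S => hS m.asIdeal m.isMaximal.isPrime
    (hjac.trans (sInf_le ⟨bot_le, m.isMaximal⟩))
  have hspan : Ideal.span (Set.range w) = ⊤ := by
    by_contra hne
    obtain ⟨m, hm, hle⟩ := Ideal.exists_le_maximal _ hne
    exact hw ⟨m, hm⟩ (hle (Ideal.subset_span ⟨_, rfl⟩))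
  obtain ⟨s, hs, hs1⟩ := (Ideal.span_eq_top_iff_finite _).1 hspan
  choose k hk using fun x : s => hs x.2
  have hspan' : Ideal.span (Set.range fun x => w (k x)) = ⊤ := by
    simpa [hk] using hs1
  obtain ⟨b, hb⟩ := exists_forall_exists_notMem_mul_sub_eq_zero (a := fun x => a (k x)) hjac
    (fun 𝔭 _ => isPreconnected_zeroLocus_sup_map I 𝔭) hspan' fun x y z _ hz hx hy =>
      exists_notMem_mul_eq_zero_of_forall_isHenselianTest fun T _ J t ht => by
        have htI := ht.map_comp_le hz
        obtain ⟨v, hv, hxv⟩ := ha (k x) T J ht.henselian t htI (ht.isUnit hx)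
        obtain ⟨v', hv', hyv⟩ := ha (k y) T J ht.henselian t htI (ht.isUnit hy)
        rw [map_sub, map_mul, map_mul, hxv, hyv, hc T J ht.henselian _ htI v v' hv hv']
        ring
  refine ⟨b, fun z _ hz T _ J t ht => ?_⟩
  obtain ⟨x, hx⟩ := exists_notMem_of_span_range_eq_top hspan' (Ideal.IsPrime.ne_top ‹_›)
  obtain ⟨v, hv, hxv⟩ := ha (k x) T J ht.henselian t (ht.map_comp_le hz) (ht.isUnit hx)
  obtain ⟨h, hh, hhb⟩ := hb x z ‹_› hz hx
  have := congr(t $hhb)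
  rw [map_mul, map_zero, (ht.isUnit hh).mul_right_eq_zero, map_sub, map_mul, hxv, mul_comm,
    ← sub_mul, (ht.isUnit hx).mul_left_eq_zero, sub_eq_zero] at this
  rwa [← this]

theorem IsPullbackSection.exists_algebraMap_eq {S : Type u} [CommRing S] [Algebra R S]
    [Algebra.IsIntegral R S] [Module.FaithfullyFlat R S] (hI : I ≤ Ideal.jacobson ⊥)
    (hc : IsCompatibleFamily I ρ c) {b : S} (hb : IsPullbackSection I ρ c (algebraMap R S) b) :
    ∃ x, algebraMap R S x = b := by
  have : Algebra.IsIntegral R (S ⊗[R] S) := .trans S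
  let left : S →ₐ[R] S ⊗[R] S := Algebra.TensorProduct.includeLeft
  let right : S →ₐ[R] S ⊗[R] S := Algebra.TensorProduct.includeRight
  have heq : left b = right b := (hb.map_algHom left).ext hc
    (map_le_jacobson_bot_of_isIntegral hI) (hb.map_algHom right)
  rw [← Set.mem_range, ← Algebra.IsEffective.eqLocus_includeLeft_includeRight
    (.of_faithfullyFlat R S)]
  exact heq

theorem IsPullbackSection.apply_eq {S : Type u} [CommRing S] [Algebra R S]
    [Algebra.IsIntegral R S] [Module.FaithfullyFlat R S] {i : ι}
    (hH : I.map (ρ i) ≤ Ideal.jacobson ⊥) (hc : IsCompatibleFamily I ρ c) {x : R}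
    (hx : IsPullbackSection I ρ c (algebraMap R S) (algebraMap R S x)) : ρ i x = c i := by
  algebraize [ρ i]
  apply FaithfulSMul.algebraMap_injective (H i) (H i ⊗[R] S)
  have hr := hx.map_algHom (Algebra.TensorProduct.includeRight : S →ₐ[R] H i ⊗[R] S)
  rw [AlgHom.commutes, IsScalarTower.algebraMap_apply R (H i)] at hr
  refine hr.ext hc ?_ (.of_chart rfl)
  rw [IsScalarTower.algebraMap_eq R (H i), ← Ideal.map_map]
  exact map_le_jacobson_bot_of_isIntegral hH

/-- The section comes from a function on a finite faithfully flat cover, which descends because its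
two pullbacks to the self-product of the cover agree at all points. -/
theorem exists_forall_apply_eq_of_isCompatibleFamily [HenselianRing R I] [Finite ι]
    (hg : Ideal.span (Set.range g) = ⊤) (hρ : ∀ i, IsHenselizationAway I (g i) (ρ i))
    (hc : IsCompatibleFamily I ρ c) : ∃ x, ∀ i, ρ i x = c i := by
  obtain ⟨S, _, _, _, _, hS⟩ := exists_finite_faithfullyFlat_exists_isLocalValue (c := c) hg hρ
  obtain ⟨b, hb⟩ := exists_isPullbackSection_of_isIntegral hc hS
  obtain ⟨x, rfl⟩ := hb.exists_algebraMap_eq HenselianRing.jac hc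
  exact ⟨x, fun i => hb.apply_eq (hρ i).1.jac hc⟩

theorem exists_ringHom_of_isCompatibleFamily [HenselianRing R I] [Finite ι]
    (hg : Ideal.span (Set.range g) = ⊤) (hρ : ∀ i, IsHenselizationAway I (g i) (ρ i)) {B : Type*}
    [CommRing B] {σ : ∀ i, B →+* H i} (hσ : ∀ b, IsCompatibleFamily I ρ fun i => σ i b) :
    ∃ s : B →+* R, ∀ i, (ρ i).comp s = σ i := by
  have hinj {x y : R} (hxy : ∀ i, ρ i x = ρ i y) : x = y :=
    eq_of_forall_isHenselizationAway hg hρ hxy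
  choose s hs using fun b => exists_forall_apply_eq_of_isCompatibleFamily hg hρ (hσ b)
  exact ⟨⟨⟨⟨s, hinj fun i => by simp [hs]⟩, fun _ _ => hinj fun i => by simp [hs]⟩,
    hinj fun i => by simp [hs], fun _ _ => hinj fun i => by simp [hs]⟩,
    fun i => RingHom.ext fun b => hs b i⟩

end Gluing

noncomputable section Approximation

open CategoryTheory Limits

variable (R B : Type u) [CommRing R] [CommRing B] [Algebra R B]

/-- A finitely presented approximation of the `R`-algebra `B`: finitely many elements of `B` and a
finitely generated ideal of algebraic relations between them. -/
structure FpApproximation where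
  gens : Finset B
  relations : Ideal (MvPolynomial gens R)
  fg : relations.FG
  le_ker : relations ≤ RingHom.ker (MvPolynomial.aeval (R := R) (Subtype.val : gens → B))

namespace FpApproximation

variable {R B}

/-- The inclusion of polynomial rings induced by an inclusion of finite subsets of `B`. -/
abbrev inclusion {σ τ : Finset B} (h : σ ⊆ τ) : MvPolynomial σ R →ₐ[R] MvPolynomial τ R :=
  MvPolynomial.rename fun x => ⟨x, h x.2⟩

theorem aeval_inclusion {σ τ : Finset B} (h : σ ⊆ τ) (p : MvPolynomial σ R) :
    MvPolynomial.aeval (Subtype.val : τ → B) (inclusion h p) =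
      MvPolynomial.aeval (Subtype.val : σ → B) p :=
  MvPolynomial.aeval_rename _ _ _

instance : Preorder (FpApproximation R B) where
  le X Y := ∃ h : X.gens ⊆ Y.gens, X.relations ≤ Y.relations.comap (inclusion h)
  le_refl X := ⟨subset_rfl, fun x hx =>
    show MvPolynomial.rename id x ∈ X.relations by rwa [MvPolynomial.rename_id_apply]⟩
  le_trans X Y Z := fun ⟨h, hr⟩ ⟨h', hr'⟩ => ⟨h.trans h', fun x hx => by
    have := hr' (hr hx)
    rwa [Ideal.mem_comap, MvPolynomial.rename_rename] at this⟩

variable {X Y Z : FpApproximation R B}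

variable (X) in
/-- The finitely presented `R`-algebra with the given generators and relations. -/
abbrev Ring : Type u := MvPolynomial X.gens R ⧸ X.relations

variable (X) in
/-- The evaluation map from an approximation of `B` to `B`. -/
def eval : X.Ring →ₐ[R] B :=
  Ideal.Quotient.liftₐ X.relations (MvPolynomial.aeval Subtype.val) X.le_ker

/-- The transition map between two approximations of `B`. -/
def map (h : X ≤ Y) : X.Ring →ₐ[R] Y.Ring := Ideal.quotientMapₐ _ (inclusion h.1) h.2

variable (X) in
theorem finitePresentation_algebraMap : (algebraMap R X.Ring).FinitePresentation :=
  RingHom.finitePresentation_algebraMap.2 (.quotient X.fg)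

theorem eval_comp_map (h : X ≤ Y) : Y.eval.comp (map h) = X.eval :=
  Ideal.Quotient.algHom_ext _ <| MvPolynomial.algHom_ext fun x => by
    exact aeval_inclusion h.1 (.X x)

theorem map_comp_map (h : X ≤ Y) (h' : Y ≤ Z) : (map h').comp (map h) = map (h.trans h') :=
  Ideal.Quotient.algHom_ext _ <| MvPolynomial.algHom_ext fun x => by
    simp [map]

theorem map_refl : map (le_refl X) = AlgHom.id R X.Ring :=
  Ideal.Quotient.algHom_ext _ <| MvPolynomial.algHom_ext fun x => by
    simp [map]

open Classical in
instance : IsDirectedOrder (FpApproximation R B) where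
  directed X Y := by
    have hX : X.gens ⊆ X.gens ∪ Y.gens := Finset.subset_union_left
    have hY : Y.gens ⊆ X.gens ∪ Y.gens := Finset.subset_union_right
    refine ⟨⟨X.gens ∪ Y.gens, X.relations.map (inclusion hX) ⊔ Y.relations.map (inclusion hY),
      Submodule.FG.sup (X.fg.map _) (Y.fg.map _), sup_le ?_ ?_⟩,
      ⟨hX, Ideal.map_le_iff_le_comap.1 le_sup_left⟩, ⟨hY, Ideal.map_le_iff_le_comap.1 le_sup_right⟩⟩
    · exact Ideal.map_le_iff_le_comap.2 fun p hp => (aeval_inclusion hX p).trans (X.le_ker hp)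
    · exact Ideal.map_le_iff_le_comap.2 fun p hp => (aeval_inclusion hY p).trans (Y.le_ker hp)

instance : Nonempty (FpApproximation R B) := ⟨⟨∅, ⊥, Submodule.fg_bot, bot_le⟩⟩

theorem exists_eval_eq (b : B) : ∃ (X : FpApproximation R B) (x : X.Ring), X.eval x = b :=
  ⟨⟨{b}, ⊥, Submodule.fg_bot, bot_le⟩, Ideal.Quotient.mk _ (.X ⟨b, by simp⟩),
    MvPolynomial.aeval_X _ _⟩

theorem exists_map_eq (x y : X.Ring) (h : X.eval x = X.eval y) :
    ∃ (Y : FpApproximation R B) (hXY : X ≤ Y), map hXY x = map hXY y := by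
  obtain ⟨p, rfl⟩ := Ideal.Quotient.mk_surjective x
  obtain ⟨q, rfl⟩ := Ideal.Quotient.mk_surjective y
  refine ⟨⟨X.gens, X.relations ⊔ Ideal.span {p - q},
    Submodule.FG.sup X.fg (Submodule.fg_span_singleton _), sup_le X.le_ker ?_⟩,
    ⟨subset_rfl, ?_⟩, ?_⟩
  · rw [Ideal.span_singleton_le_iff_mem, RingHom.mem_ker, map_sub, sub_eq_zero]
    exact h
  · change X.relations ≤ (X.relations ⊔ _).comap (MvPolynomial.rename (R := R) id)
    rw [MvPolynomial.rename_id]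
    exact le_sup_left
  · refine (Ideal.Quotient.eq).2 ?_
    change MvPolynomial.rename id p - MvPolynomial.rename id q ∈ _
    rw [MvPolynomial.rename_id]
    exact Ideal.mem_sup_right (Ideal.mem_span_singleton_self _)

variable (R B) in
/-- The filtered diagram of finitely presented approximations of `B`. -/
def diagram : FpApproximation R B ⥤ Under (CommRingCat.of R) where
  obj X := CommRingCat.mkUnder _ X.Ring
  map f := (map f.le).toUnder
  map_id _ := CommRingCat.mkUnder_ext fun x => congr($map_refl x)
  map_comp f g := CommRingCat.mkUnder_ext fun x => congr($(map_comp_map f.le g.le) x).symm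

variable (R B) in
/-- The cocone of the finitely presented approximations of `B` over `B`. -/
def cocone : Cocone (diagram R B) where
  pt := CommRingCat.mkUnder _ B
  ι :=
    { app X := X.eval.toUnder
      naturality _ _ f := CommRingCat.mkUnder_ext fun x => congr($(eval_comp_map f.le) x) }

variable (R B) in
theorem nonempty_isColimit_cocone :
    Nonempty (IsColimit ((Under.forget (CommRingCat.of R)).mapCocone (cocone R B))) := by
  let := reflectsColimit_of_reflectsIsomorphisms (diagram R B ⋙ Under.forget _) (forget CommRingCat)
  refine ⟨isColimitOfReflects (forget CommRingCat)
    (Types.FilteredColimit.isColimitOf' _ _ (fun (b : B) => ?_) fun X x y h => ?_)⟩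
  · obtain ⟨X, x, hx⟩ := exists_eval_eq (R := R) b
    exact ⟨X, x, hx.symm⟩
  · obtain ⟨Y, hXY, hY⟩ := exists_map_eq (X := X) x y h
    exact ⟨Y, homOfLE hXY, hY⟩

end FpApproximation

end Approximation

noncomputable section HenselizationFunctor

open CategoryTheory Limits

variable {R : CommRingCat.{u}} (K : Ideal R) (g : R)

/-- The Henselization of an `R`-algebra `X` along `K` away from `g ∈ R`. -/
def henselization (X : Under R) : Under R :=
  let h := exists_isHenselizationAway (K.map X.hom.hom) (X.hom g)
  let := h.choose_spec.choose
  Under.mk (X.hom ≫ CommRingCat.ofHom h.choose_spec.choose_spec.choose)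

/-- The canonical map from an `R`-algebra to its Henselization. -/
def toHenselization (X : Under R) : X ⟶ henselization K g X :=
  let h := exists_isHenselizationAway (K.map X.hom.hom) (X.hom g)
  let := h.choose_spec.choose
  Under.homMk (CommRingCat.ofHom h.choose_spec.choose_spec.choose)

theorem isHenselizationAway_toHenselization (X : Under R) :
    IsHenselizationAway (K.map X.hom.hom) (X.hom g) (toHenselization K g X).right.hom :=
  (exists_isHenselizationAway (K.map X.hom.hom) (X.hom g)).choose_spec.choose_spec.choose_spec.1

/-- The `R`-algebras that are Henselian along `K` and in which `g` is invertible. -/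
def IsHenselianAway (T : Under R) : Prop :=
  HenselianRing T.right (K.map T.hom.hom) ∧ IsUnit (T.hom g)

variable {K g} {h : R} {X Y T : Under R}

theorem map_map_hom (f : X ⟶ T) : (K.map X.hom.hom).map f.right.hom = K.map T.hom.hom := by
  rw [Ideal.map_map, ← CommRingCat.hom_comp, Under.w]

theorem hom_apply (f : X ⟶ T) (r : R) : f.right (X.hom r) = T.hom r := by
  rw [← ConcreteCategory.comp_apply, Under.w]

theorem isHenselianAway_henselization (X : Under R) :
    IsHenselianAway K g (henselization K g X) := by
  have hX := isHenselizationAway_toHenselization K g X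
  refine ⟨map_map_hom (K := K) (toHenselization K g X) ▸ hX.1, ?_⟩
  exact hom_apply (toHenselization K g X) g ▸ hX.2.1

theorem IsHenselianAway.of_dvd (hT : IsHenselianAway K g T) (hh : h ∣ g) :
    IsHenselianAway K h T :=
  ⟨hT.1, isUnit_of_dvd_unit (map_dvd T.hom.hom hh) hT.2⟩

theorem IsHenselianAway.exists_toHenselization_comp_eq (hT : IsHenselianAway K g T) (f : X ⟶ T) :
    ∃ f' : henselization K g X ⟶ T, toHenselization K g X ≫ f' = f := by
  obtain ⟨φ, hφ⟩ := ((isHenselizationAway_toHenselization K g X).2.2 T.right _ hT.1 f.right.hom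
    (map_map_hom f).le (by simpa only [← hom_apply f] using hT.2)).exists
  let ψ : (henselization K g X).right ⟶ T.right :=
    CommRingCat.ofHom (R := (henselization K g X).right) φ
  have hψ : (toHenselization K g X).right ≫ ψ = f.right := CommRingCat.hom_ext hφ
  exact ⟨Under.homMk ψ (by rw [← Under.w (toHenselization K g X), Category.assoc, hψ, Under.w]),
    Under.UnderMorphism.ext hψ⟩

/-- The extension to the Henselization of a map to a Henselian algebra. -/
def IsHenselianAway.desc (hT : IsHenselianAway K g T) (f : X ⟶ T) : henselization K g X ⟶ T :=
  (hT.exists_toHenselization_comp_eq f).choose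

theorem IsHenselianAway.toHenselization_desc (hT : IsHenselianAway K g T) (f : X ⟶ T) :
    toHenselization K g X ≫ hT.desc f = f :=
  (hT.exists_toHenselization_comp_eq f).choose_spec

theorem IsHenselianAway.hom_ext (hT : IsHenselianAway K h T) {a b : henselization K g X ⟶ T}
    (hab : toHenselization K g X ≫ a = toHenselization K g X ≫ b) : a = b :=
  Under.UnderMorphism.ext <| CommRingCat.hom_ext <|
    (isHenselizationAway_toHenselization K g X).2.hom_ext hT.1 congr(($hab).right.hom)
      (map_map_hom (toHenselization K g X ≫ a)).le

variable (K g) in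
/-- The map induced on Henselizations by a map of `R`-algebras. -/
def henselizationMap (f : X ⟶ Y) : henselization K g X ⟶ henselization K g Y :=
  (isHenselianAway_henselization Y).desc (f ≫ toHenselization K g Y)

theorem toHenselization_map (f : X ⟶ Y) :
    toHenselization K g X ≫ henselizationMap K g f = f ≫ toHenselization K g Y :=
  IsHenselianAway.toHenselization_desc _ _

theorem henselizationMap_comp {Z : Under R} (f : X ⟶ Y) (f' : Y ⟶ Z) :
    henselizationMap K g (f ≫ f') = henselizationMap K g f ≫ henselizationMap K g f' :=
  (isHenselianAway_henselization _).hom_ext (by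
    rw [toHenselization_map, ← Category.assoc, toHenselization_map, Category.assoc, Category.assoc,
      toHenselization_map])

variable (K g) in
/-- Henselization along `K` away from `g`, as an endofunctor of the category of `R`-algebras. -/
def henselizationFunctor : Under R ⥤ Under R where
  obj := henselization K g
  map := henselizationMap K g
  map_id X := (isHenselianAway_henselization X).hom_ext (by
    rw [toHenselization_map, Category.id_comp, Category.comp_id])
  map_comp := henselizationMap_comp

/-- The restriction map from the Henselization away from `g` to the one away from a multiple
of `g`. -/
def henselizationRestrict (hgh : g ∣ h) (X : Under R) : henselization K g X ⟶ henselization K h X :=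
  ((isHenselianAway_henselization X).of_dvd hgh).desc (toHenselization K h X)

theorem toHenselization_restrict (hgh : g ∣ h) (X : Under R) :
    toHenselization K g X ≫ henselizationRestrict hgh X = toHenselization K h X :=
  IsHenselianAway.toHenselization_desc _ _

theorem IsHenselianAway.restrict_comp_henselizationMap (hY : IsHenselianAway K g Y) (hgh : g ∣ h)
    (f : X ⟶ Y) : henselizationRestrict hgh X ≫ henselizationMap K h f =
      hY.desc f ≫ toHenselization K h Y :=
  ((isHenselianAway_henselization Y).of_dvd hgh).hom_ext (by
    rw [← Category.assoc, toHenselization_restrict, toHenselization_map, ← Category.assoc,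
      toHenselization_desc])

theorem henselizationRestrict_comp {k : R} (hgh : g ∣ h) (hhk : h ∣ k) (X : Under R) :
    henselizationRestrict hgh X ≫ henselizationRestrict hhk X =
      henselizationRestrict (K := K) (hgh.trans hhk) X :=
  ((isHenselianAway_henselization X).of_dvd hhk).hom_ext (by
    rw [← Category.assoc, toHenselization_restrict, toHenselization_restrict,
      toHenselization_restrict])

theorem henselizationRestrict_naturality (hgh : g ∣ h) (f : X ⟶ Y) :
    henselizationRestrict hgh X ≫ henselizationMap K h f =
      henselizationMap K g f ≫ henselizationRestrict hgh Y :=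
  (isHenselianAway_henselization Y).hom_ext (by
    rw [← Category.assoc, toHenselization_restrict, ← Category.assoc, toHenselization_map,
      toHenselization_map, Category.assoc, toHenselization_restrict])

theorem isHenselizationAway_restrict (hgh : g ∣ h) (X : Under R) :
    IsHenselizationAway (K.map (henselization K g X).hom.hom) ((henselization K g X).hom h)
      (henselizationRestrict (K := K) hgh X).right.hom := by
  have hq := (isHenselizationAway_toHenselization K g X).2
  have hρ := (isHenselizationAway_toHenselization K h X).2
  rw [← toHenselization_restrict hgh] at hρ
  rw [← hom_apply (toHenselization K g X), ← map_map_hom (toHenselization K g X)]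
  refine ⟨?_, hq.of_comp_of_dvd (map_dvd X.hom.hom hgh) hρ⟩
  rw [map_map_hom (toHenselization K g X), map_map_hom]
  exact (isHenselianAway_henselization X).1

variable {J : Type u} [SmallCategory J] [IsFiltered J] {F : J ⥤ Under R}

theorem henselianRing_of_isColimit_under {c : Cocone (F ⋙ Under.forget R)} (hc : IsColimit c)
    (ρ : R ⟶ c.pt) (hρ : ∀ j, (F.obj j).hom ≫ c.ι.app j = ρ)
    (h : ∀ j, HenselianRing (F.obj j).right (K.map (F.obj j).hom.hom)) :
    HenselianRing c.pt (K.map ρ.hom) := by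
  refine henselianRing_of_isColimit hc (q := fun j => (F.obj j).hom.hom)
    (fun _ _ φ => congr(($(Under.w (F.map φ))).hom)) (fun j => congr(($(hρ j)).hom))
    (fun j z hz => ⟨j, 𝟙 j, ?_⟩) (fun j p x hp h0 h1 => ?_)
  · have := h j
    rw [CategoryTheory.Functor.map_id]
    exact isUnit_of_sub_one_mem (K.map (F.obj j).hom.hom) ((add_sub_cancel_right z 1).symm ▸ hz)
  · obtain ⟨y, hy, hyx⟩ := (h j).is_henselian p hp x h0 h1
    refine ⟨j, 𝟙 j, y, ?_, ?_⟩ <;> rw [CategoryTheory.Functor.map_id]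
    · exact (Polynomial.map_id (p := p)).symm ▸ hy
    · exact hyx

/-- The canonical maps to the Henselizations, over the diagram `F`. -/
def toHenselizationDiagram (F : J ⥤ Under R) :
    F ⋙ Under.forget R ⟶ (F ⋙ henselizationFunctor K g) ⋙ Under.forget R where
  app j := (toHenselization K g (F.obj j)).right
  naturality _ _ φ := congr(($(toHenselization_map (K := K) (g := g) (F.map φ))).right).symm

theorem isHenselizationAway_of_isColimit {c : Cocone F}
    (hc : IsColimit ((Under.forget R).mapCocone c))
    {L : Cocone ((F ⋙ henselizationFunctor K g) ⋙ Under.forget R)} (hL : IsColimit L)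
    (ρ : c.pt.right ⟶ L.pt)
    (hρ : ∀ j, (c.ι.app j).right ≫ ρ = (toHenselizationDiagram F).app j ≫ L.ι.app j) :
    IsHenselizationAway (K.map c.pt.hom.hom) (c.pt.hom g) ρ.hom := by
  refine ⟨?_, isHenselEquivAway_of_isColimit hc hL (toHenselizationDiagram F) ρ hρ
    (fun j => (isHenselizationAway_toHenselization K g (F.obj j)).2)
    (fun j => (map_map_hom (c.ι.app j)).le) fun j => hom_apply (c.ι.app j) g⟩
  rw [Ideal.map_map]
  refine henselianRing_of_isColimit_under hL (c.pt.hom ≫ ρ) (fun j => ?_)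
    fun j => (isHenselianAway_henselization (F.obj j)).1
  calc (henselization K g (F.obj j)).hom ≫ L.ι.app j
    _ = (F.obj j).hom ≫ (toHenselization K g (F.obj j)).right ≫ L.ι.app j := Category.assoc _ _ _
    _ = (F.obj j).hom ≫ (c.ι.app j).right ≫ ρ := congr((F.obj j).hom ≫ $(hρ j)).symm
    _ = ((F.obj j).hom ≫ (c.ι.app j).right) ≫ ρ := (Category.assoc _ _ _).symm
    _ = c.pt.hom ≫ ρ := congr($(Under.w (c.ι.app j)) ≫ ρ)

theorem nonempty_isColimit_henselization {c : Cocone F}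
    (hc : IsColimit ((Under.forget R).mapCocone c)) :
    Nonempty (IsColimit ((Under.forget R).mapCocone ((henselizationFunctor K g).mapCocone c))) := by
  let H := henselizationFunctor K g
  let η := toHenselizationDiagram (K := K) (g := g) F
  let L := colimit.cocone ((F ⋙ H) ⋙ Under.forget R)
  let hL : IsColimit L := colimit.isColimit _
  let ρ : c.pt.right ⟶ L.pt := hc.desc ((Cocone.precompose η).obj L)
  let lι (j : J) : (henselization K g (F.obj j)).right ⟶ L.pt := L.ι.app j
  have hρ (j) : (c.ι.app j).right ≫ ρ = (toHenselization K g (F.obj j)).right ≫ lι j := hc.fac _ j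
  have hρ' := isHenselizationAway_of_isColimit hc hL ρ hρ
  let d : L.pt ⟶ (henselization K g c.pt).right :=
    hL.desc ((Under.forget R).mapCocone (H.mapCocone c))
  have hd : ρ ≫ d = (toHenselization K g c.pt).right := hc.hom_ext fun j => calc
    (c.ι.app j).right ≫ ρ ≫ d
    _ = (toHenselization K g (F.obj j)).right ≫ lι j ≫ d := by
      rw [← Category.assoc, hρ, Category.assoc]
    _ = (toHenselization K g (F.obj j)).right ≫ (henselizationMap K g (c.ι.app j)).right :=
      congrArg ((toHenselization K g (F.obj j)).right ≫ ·) (hL.fac _ j)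
    _ = _ := congr(($(toHenselization_map (c.ι.app j))).right)
  obtain ⟨e, he⟩ := hρ'.exists_ringEquiv (isHenselizationAway_toHenselization K g c.pt)
  have hde : d = e.toCommRingCatIso.hom := CommRingCat.hom_ext <|
    (isHenselizationAway_toHenselization K g c.pt).hom_ext hρ'.2 congr(($hd).hom) he
  have hd_iso : IsIso d := hde ▸ inferInstance
  exact ⟨IsColimit.ofPointIso hL (i := hd_iso)⟩

end HenselizationFunctor

section Compactness

open CategoryTheory Limits

variable {R : CommRingCat.{u}} {K : Ideal R} {S : Under R}

theorem IsHfp.exists_iso_henselization (hS : IsHfp S.hom.hom K) :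
    ∃ Q : Under R, Q.hom.hom.FinitePresentation ∧ Nonempty (henselization K 1 Q ≅ S) := by
  obtain ⟨Q, _, ψ, ρ, hψ, hρ, h⟩ := hS
  let X : Under R := Under.mk (CommRingCat.ofHom ψ)
  rw [isHenselization_iff_isHenselizationAway_one, ← map_one ψ] at h
  obtain ⟨e, he⟩ := (isHenselizationAway_toHenselization K 1 X).exists_ringEquiv h
  refine ⟨X, hψ, ⟨Under.isoMk e.toCommRingCatIso (CommRingCat.hom_ext ?_)⟩⟩
  exact congr($(he).comp ψ).trans hρ

variable {J : Type u} [SmallCategory J] [IsFiltered J] {F : J ⥤ Under R} {c : Cocone F}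

theorem IsHenselianAway.of_isColimit (hc : IsColimit ((Under.forget R).mapCocone c))
    (hF : ∀ j, IsHenselianAway K 1 (F.obj j)) : IsHenselianAway K 1 c.pt :=
  ⟨henselianRing_of_isColimit_under hc _ (fun j => Under.w (c.ι.app j)) fun j => (hF j).1, by simp⟩

theorem IsHfp.exists_eq_comp_ι_app (hS : IsHfp S.hom.hom K)
    (hc : IsColimit ((Under.forget R).mapCocone c)) (hF : ∀ j, IsHenselianAway K 1 (F.obj j))
    (f : S ⟶ c.pt) : ∃ (j : J) (f' : S ⟶ F.obj j), f' ≫ c.ι.app j = f := by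
  obtain ⟨Q, hQ, ⟨e⟩⟩ := hS.exists_iso_henselization
  obtain ⟨j, q, hq, hqf⟩ := RingHom.EssFiniteType.exists_eq_comp_ι_app_of_isColimit R
    (F ⋙ Under.forget R) { app i := (F.obj i).hom } Q.hom ((Under.forget R).mapCocone c) hc hQ
    (toHenselization K 1 Q ≫ e.hom ≫ f).right (by simp)
  let q' : Q ⟶ F.obj j := Under.homMk q hq
  have hq' : toHenselization K 1 Q ≫ e.hom ≫ f = q' ≫ c.ι.app j := Under.UnderMorphism.ext hqf
  refine ⟨j, e.inv ≫ (hF j).desc q', ?_⟩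
  rw [Category.assoc, Iso.inv_comp_eq]
  refine (IsHenselianAway.of_isColimit hc hF).hom_ext ?_
  rw [hq', ← Category.assoc, IsHenselianAway.toHenselization_desc]

theorem IsHfp.exists_comp_map_eq (hS : IsHfp S.hom.hom K)
    (hc : IsColimit ((Under.forget R).mapCocone c)) (hF : ∀ j, IsHenselianAway K 1 (F.obj j))
    {i j : J} (a : S ⟶ F.obj i) (b : S ⟶ F.obj j) (hab : a ≫ c.ι.app i = b ≫ c.ι.app j) :
    ∃ (k : J) (hik : i ⟶ k) (hjk : j ⟶ k), a ≫ F.map hik = b ≫ F.map hjk := by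
  obtain ⟨Q, hQ, ⟨e⟩⟩ := hS.exists_iso_henselization
  let p : Q ⟶ S := toHenselization K 1 Q ≫ e.hom
  obtain ⟨k, hik, hjk, h⟩ := RingHom.EssFiniteType.exists_comp_map_eq_of_isColimit R
    (F ⋙ Under.forget R) { app i := (F.obj i).hom } Q.hom ((Under.forget R).mapCocone c) hc
    (RingHom.FiniteType.of_finitePresentation hQ).essFiniteType
    (p ≫ a).right (Under.w _) (p ≫ b).right (Under.w _) (by simpa using congr((p ≫ $hab).right))
  refine ⟨k, hik, hjk, (cancel_epi e.hom).1 ((hF k).hom_ext (Under.UnderMorphism.ext ?_))⟩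
  simpa [p] using h

end Compactness

theorem span_range_map_eq_top {R S ι : Type*} [CommRing R] [CommRing S] {g : ι → R} (φ : R →+* S)
    (hg : Ideal.span (Set.range g) = ⊤) : Ideal.span (Set.range fun i => φ (g i)) = ⊤ := by
  rw [Set.range_comp' φ g, ← Ideal.map_span, hg, Ideal.map_top]

section Sections

open CategoryTheory Limits

variable {R : CommRingCat.{u}} {K : Ideal R} {B X : Under R} {ι : Type*} {g : ι → R}

theorem isCompatibleFamily_of_comp_restrict_eq (σ : ∀ i, B ⟶ henselization K (g i) X)
    (hσ : ∀ i j, σ i ≫ henselizationRestrict (dvd_mul_right (g i) (g j)) X =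
      σ j ≫ henselizationRestrict (dvd_mul_left (g j) (g i)) X) (b : B.right) :
    IsCompatibleFamily (K.map (henselization K 1 X).hom.hom)
      (fun i => (henselizationRestrict (K := K) (one_dvd (g i)) X).right.hom)
      fun i => (σ i).right b := by
  rintro T _ J hJ t ht _ _ ⟨i, u, hu, rfl⟩ ⟨j, v, hv, rfl⟩
  have hr (h : R) := (isHenselizationAway_restrict (K := K) (one_dvd h) X).2
  have hti : IsUnit (t ((henselization K 1 X).hom (g i))) := hu ▸ (hr (g i)).1.map u
  have htj : IsUnit (t ((henselization K 1 X).hom (g j))) := hv ▸ (hr (g j)).1.map v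
  obtain ⟨w, hw, -⟩ := (hr (g i * g j)).2 T J hJ t ht (by
    simpa only [map_mul] using hti.mul htj)
  have hwr {h : R} (hh : h ∣ g i * g j) {y : (henselization K h X).right →+* T}
      (hy : y.comp (henselizationRestrict (one_dvd h) X).right.hom = t) :
      y = w.comp (henselizationRestrict hh X).right.hom := by
    refine (hr h).hom_ext hJ ?_ (hy ▸ ht)
    rw [hy, RingHom.comp_assoc, ← CommRingCat.hom_comp, ← Under.comp_right,
      henselizationRestrict_comp, hw]
  rw [hwr (dvd_mul_right _ _) hu, hwr (dvd_mul_left _ _) hv]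
  exact congr(w (($(hσ i j)).right b))

variable [Finite ι]

theorem exists_comp_restrict_eq (hg : Ideal.span (Set.range g) = ⊤)
    (σ : ∀ i, B ⟶ henselization K (g i) X)
    (hσ : ∀ i j, σ i ≫ henselizationRestrict (dvd_mul_right (g i) (g j)) X =
      σ j ≫ henselizationRestrict (dvd_mul_left (g j) (g i)) X) :
    ∃ s : B ⟶ henselization K 1 X, ∀ i, s ≫ henselizationRestrict (one_dvd (g i)) X = σ i := by
  have := (isHenselianAway_henselization (K := K) (g := 1) X).1
  have hgX := span_range_map_eq_top (henselization K 1 X).hom.hom hg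
  have hr (i) := isHenselizationAway_restrict (K := K) (one_dvd (g i)) X
  obtain ⟨s, hs⟩ := exists_ringHom_of_isCompatibleFamily hgX hr (σ := fun i => (σ i).right.hom)
    (isCompatibleFamily_of_comp_restrict_eq σ hσ)
  let s' : B.right ⟶ (henselization K 1 X).right :=
    CommRingCat.ofHom (S := (henselization K 1 X).right) s
  have hs' : B.hom ≫ s' = (henselization K 1 X).hom := CommRingCat.hom_ext <|
    RingHom.ext fun r => eq_of_forall_isHenselizationAway hgX hr fun i => by
      rw [← RingHom.comp_apply]
      exact congr($(hs i) (B.hom r)).trans ((hom_apply (σ i) r).trans (hom_apply _ r).symm)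
  exact ⟨Under.homMk s' hs', fun i => Under.UnderMorphism.ext (CommRingCat.hom_ext (hs i))⟩

variable {J : Type u} [Preorder J] [IsDirectedOrder J] [Nonempty J] {F : J ⥤ Under R} {c : Cocone F}

theorem exists_comp_henselizationMap_eq (hc : IsColimit ((Under.forget R).mapCocone c)) {g : R}
    (h : IsHfp (henselization K g c.pt).hom.hom K) :
    ∃ (j : J) (σ : c.pt ⟶ henselization K g (F.obj j)),
      σ ≫ henselizationMap K g (c.ι.app j) = toHenselization K g c.pt := by
  obtain ⟨hc'⟩ := nonempty_isColimit_henselization (K := K) (g := g) hc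
  obtain ⟨j, (τ : _ ⟶ henselization K g (F.obj j)), hτ⟩ := h.exists_eq_comp_ι_app hc'
    (fun j => (isHenselianAway_henselization (F.obj j)).of_dvd (one_dvd g)) (𝟙 _)
  refine ⟨j, toHenselization K g c.pt ≫ τ, ?_⟩
  rw [Category.assoc]
  exact (congr(toHenselization K g c.pt ≫ $hτ)).trans (Category.comp_id _)

theorem exists_map_comp_restrict_eq (hc : IsColimit ((Under.forget R).mapCocone c)) {g g' : R}
    (h : IsHfp (henselization K g c.pt).hom.hom K) {j : J}
    {σ : c.pt ⟶ henselization K g (F.obj j)} {σ' : c.pt ⟶ henselization K g' (F.obj j)}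
    (hσ : σ ≫ henselizationMap K g (c.ι.app j) = toHenselization K g c.pt)
    (hσ' : σ' ≫ henselizationMap K g' (c.ι.app j) = toHenselization K g' c.pt) :
    ∃ (k : J) (hjk : j ⟶ k),
      (σ ≫ henselizationRestrict (dvd_mul_right g g') _) ≫
          henselizationMap K (g * g') (F.map hjk) =
        (σ' ≫ henselizationRestrict (dvd_mul_left g' g) _) ≫
          henselizationMap K (g * g') (F.map hjk) := by
  obtain ⟨hc'⟩ := nonempty_isColimit_henselization (K := K) (g := g * g') hc
  have hF (j : J) : IsHenselianAway K g (henselization K (g * g') (F.obj j)) :=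
    (isHenselianAway_henselization (F.obj j)).of_dvd (dvd_mul_right g g')
  let a := (hF j).desc (σ ≫ henselizationRestrict (dvd_mul_right g g') _)
  let b := (hF j).desc (σ' ≫ henselizationRestrict (dvd_mul_left g' g) _)
  have hab : a ≫ henselizationMap K (g * g') (c.ι.app j) =
      b ≫ henselizationMap K (g * g') (c.ι.app j) := by
    refine ((isHenselianAway_henselization c.pt).of_dvd (dvd_mul_right g g')).hom_ext ?_
    simp only [a, b, ← Category.assoc, IsHenselianAway.toHenselization_desc]
    simp only [Category.assoc, henselizationRestrict_naturality]
    rw [← Category.assoc, hσ, ← Category.assoc, hσ']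
    exact (toHenselization_restrict _ _).trans (toHenselization_restrict _ _).symm
  obtain ⟨k, hk, hk', hk_eq⟩ := h.exists_comp_map_eq hc'
    (fun j => (hF j).of_dvd (one_dvd g)) a b hab
  obtain rfl : hk = hk' := Subsingleton.elim _ _
  refine ⟨k, hk, ?_⟩
  rw [← IsHenselianAway.toHenselization_desc (hF j) (σ ≫ _),
    ← IsHenselianAway.toHenselization_desc (hF j) (σ' ≫ _), Category.assoc, Category.assoc]
  exact congr(toHenselization K g c.pt ≫ $hk_eq)

theorem exists_compatible_sections (hc : IsColimit ((Under.forget R).mapCocone c))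
    (h : ∀ i, IsHfp (henselization K (g i) c.pt).hom.hom K) :
    ∃ (j : J) (σ : ∀ i, c.pt ⟶ henselization K (g i) (F.obj j)),
      (∀ i, σ i ≫ henselizationMap K (g i) (c.ι.app j) = toHenselization K (g i) c.pt) ∧
      ∀ i i', σ i ≫ henselizationRestrict (dvd_mul_right (g i) (g i')) (F.obj j) =
        σ i' ≫ henselizationRestrict (dvd_mul_left (g i') (g i)) (F.obj j) := by
  have hmap {g : R} {j k : J} (f : j ⟶ k) {σ : c.pt ⟶ henselization K g (F.obj j)}
      (hσ : σ ≫ henselizationMap K g (c.ι.app j) = toHenselization K g c.pt) :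
      (σ ≫ henselizationMap K g (F.map f)) ≫ henselizationMap K g (c.ι.app k) =
        toHenselization K g c.pt := by
    rw [← hσ, Category.assoc, ← henselizationMap_comp]
    exact congr(σ ≫ henselizationMap K g $(c.w f))
  choose j₀ σ₀ hσ₀ using fun i => exists_comp_henselizationMap_eq hc (h i)
  obtain ⟨j, hj⟩ := Finite.exists_le j₀
  let σ (i) := σ₀ i ≫ henselizationMap K (g i) (F.map (homOfLE (hj i)))
  have hσ (i) : σ i ≫ henselizationMap K (g i) (c.ι.app j) = toHenselization K (g i) c.pt :=
    hmap _ (hσ₀ i)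
  choose k₀ hk₀ hσk₀ using fun p : ι × ι => exists_map_comp_restrict_eq hc (h p.1) (hσ p.1) (hσ p.2)
  obtain ⟨k₁, hk₁⟩ := Finite.exists_le k₀
  obtain ⟨k, hjk, hk₁k⟩ := exists_ge_ge j k₁
  refine ⟨k, fun i => σ i ≫ henselizationMap K (g i) (F.map (homOfLE hjk)),
    fun i => hmap _ (hσ i), fun i i' => ?_⟩
  have hjk_eq : F.map (homOfLE hjk) =
      F.map (hk₀ (i, i')) ≫ F.map (homOfLE ((hk₁ (i, i')).trans hk₁k)) := F.map_comp _ _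
  simp only [Category.assoc, ← henselizationRestrict_naturality]
  rw [hjk_eq, henselizationMap_comp, ← Category.assoc, ← Category.assoc, hσk₀ (i, i'),
    Category.assoc, Category.assoc]

theorem exists_section_of_isHfp (hg : Ideal.span (Set.range g) = ⊤)
    (hc : IsColimit ((Under.forget R).mapCocone c)) (hB : IsHenselianAway K 1 c.pt)
    (h : ∀ i, IsHfp (henselization K (g i) c.pt).hom.hom K) :
    ∃ (j : J) (s : c.pt ⟶ henselization K 1 (F.obj j)), s ≫ hB.desc (c.ι.app j) = 𝟙 _ := by
  obtain ⟨j, σ, hσ, hσσ⟩ := exists_compatible_sections hc h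
  obtain ⟨s, hs⟩ := exists_comp_restrict_eq hg σ hσσ
  have hsi (i) : (s ≫ hB.desc (c.ι.app j)) ≫ toHenselization K (g i) c.pt =
      toHenselization K (g i) c.pt := by
    have hdesc := hB.restrict_comp_henselizationMap (one_dvd (g i)) (c.ι.app j)
    rw [Category.assoc]
    refine (congr(s ≫ $hdesc)).symm.trans ?_
    rw [← Category.assoc, hs, hσ]
  have := hB.1
  exact ⟨j, s, Under.UnderMorphism.ext <| CommRingCat.hom_ext <| RingHom.ext fun b =>
    eq_of_forall_isHenselizationAway (span_range_map_eq_top c.pt.hom.hom hg)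
      (fun i => isHenselizationAway_toHenselization K (g i) c.pt)
      fun i => congr(($(hsi i)).right b)⟩

end Sections

section Hfp

open CategoryTheory

variable {A R S H B : Type u} [CommRing A] [CommRing R] [CommRing S] [CommRing H] [CommRing B]
  {I : Ideal A} {K : Ideal S}

theorem ringHom_ext_of_adjoin_eq_top [Algebra A S] {t : Set S} (ht : Algebra.adjoin A t = ⊤)
    {f g : S →+* H} (hfg : f.comp (algebraMap A S) = g.comp (algebraMap A S)) (heq : t.EqOn f g) :
    f = g := by
  algebraize [f.comp (algebraMap A S)]
  let f' : S →ₐ[A] H := ⟨f, fun _ => rfl⟩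
  let g' : S →ₐ[A] H := ⟨g, fun a => congr($hfg a).symm⟩
  have h : f' = g' := AlgHom.ext_of_adjoin_eq_top ht heq
  exact congr(($h).toRingHom)

theorem IsEtaleNhdAway.finitePresentation {g : S} {q : S →+* R} (h : IsEtaleNhdAway K g q) :
    q.FinitePresentation := by
  algebraize [q]
  have : Algebra.Etale S R := h.etale
  exact RingHom.finitePresentation_algebraMap.2 inferInstance

namespace IsHenselization

theorem of_comp {q : S →+* R} {ρ : R →+* H} (h : IsHenselization K (ρ.comp q))
    (hq : IsHenselEquivAway K 1 q) : IsHenselization (K.map q) ρ := by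
  rw [isHenselization_iff_isHenselizationAway_one] at h ⊢
  exact ⟨Ideal.map_map q ρ ▸ h.1, hq.of_comp h.2⟩

theorem of_surjective {ρ : S →+* H} (h : IsHenselization K ρ) {r : S →+* R}
    (hr : Function.Surjective r) {p : H →+* B} (hp : Function.Surjective p)
    (hker : RingHom.ker p = (RingHom.ker r).map ρ) {ρ' : R →+* B} (hρ' : ρ'.comp r = p.comp ρ) :
    IsHenselization (K.map r) ρ' := by
  have := h.1
  refine ⟨?_, fun T _ J hJ f hf => ?_⟩
  · rw [Ideal.map_map, hρ', ← Ideal.map_map]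
    exact henselianRing_map_of_surjective hp
  · obtain ⟨v, hv, hv'⟩ := h.2 T J hJ (f.comp r) (Ideal.map_map r f ▸ hf)
    have hle : RingHom.ker p ≤ RingHom.ker v := by
      rw [hker, Ideal.map_le_iff_le_comap, RingHom.comap_ker, hv]
      exact fun x hx => by rw [RingHom.mem_ker, RingHom.comp_apply, hx, map_zero]
    let w : B →+* T := RingHom.liftOfSurjective p hp ⟨v, hle⟩
    have hw : w.comp p = v := RingHom.liftOfRightInverse_comp _ _ _ _
    refine ⟨w, (RingHom.cancel_right hr).1 ?_, fun w' hw' => (RingHom.cancel_right hp).1 ?_⟩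
    · rw [RingHom.comp_assoc, hρ', ← RingHom.comp_assoc, hw, hv]
    · rw [hw]
      refine hv' _ ?_
      change (w'.comp p).comp ρ = f.comp r
      rw [RingHom.comp_assoc, ← hρ', ← RingHom.comp_assoc, hw']

theorem fg_ker {ψ : A →+* S} (hψ : ψ.FiniteType) {ρ : S →+* H} (h : IsHenselization K ρ)
    {p : H →+* B} {s : B →+* H} (hps : p.comp s = .id B)
    (hs : (s.comp p).comp (ρ.comp ψ) = ρ.comp ψ) : (RingHom.ker p).FG := by
  classical
  algebraize [ψ]
  obtain ⟨t, ht⟩ := ‹Algebra.FiniteType A S›.out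
  let 𝔞 := Ideal.span ((fun x => ρ x - s (p (ρ x))) '' t)
  have hp (b : B) : p (s b) = b := congr($hps b)
  let π := Ideal.Quotient.mk 𝔞
  have hρ : π.comp ρ = (π.comp (s.comp p)).comp ρ := by
    refine ringHom_ext_of_adjoin_eq_top ht ?_ fun x hx => ?_
    · exact congr(π.comp $hs.symm)
    · exact (Ideal.Quotient.eq).2 (Ideal.subset_span ⟨x, hx, rfl⟩)
  have := h.1
  have hπ : π = π.comp (s.comp p) := by
    rw [isHenselization_iff_isHenselizationAway_one] at h
    exact h.2.hom_ext (henselianRing_map_of_surjective Ideal.Quotient.mk_surjective) hρ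
      (Ideal.map_map ρ π).ge
  have hker : RingHom.ker p = 𝔞 := by
    refine le_antisymm (fun x hx => ?_) (Ideal.span_le.2 ?_)
    · rw [← Ideal.Quotient.eq_zero_iff_mem]
      refine congr($hπ x).trans ?_
      rw [RingHom.comp_apply, RingHom.comp_apply, (RingHom.mem_ker).1 hx, map_zero, map_zero]
    · rintro _ ⟨x, -, rfl⟩
      simp [RingHom.mem_ker, hp]
  exact hker ▸ Submodule.fg_span (t.finite_toSet.image _)

end IsHenselization

namespace IsHfp

variable {α : A →+* R} {φ : R →+* B}

theorem comp (h : IsHfp φ (I.map α)) (hα : α.FinitePresentation) : IsHfp (φ.comp α) I := by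
  obtain ⟨S, _, ψ, ρ, hψ, rfl, hρ⟩ := h
  exact ⟨S, _, ψ.comp α, ρ, hψ.comp hα, rfl, by rwa [Ideal.map_map] at hρ⟩

theorem of_comp (h : IsHfp (φ.comp α) I) (hα : α.FinitePresentation) : IsHfp φ (I.map α) := by
  obtain ⟨S, _, ψ, ρ, hψ, hρψ, hρ⟩ := h
  obtain ⟨Q, _, q, κ, θ, hq, rfl, hθ, rfl⟩ :=
    (isHenselization_iff_isHenselizationAway_one.1 hρ).exists_etaleNhd_of_finitePresentation
      hα hρψ.symm
  have hqψ : (q.comp ψ).FinitePresentation := hq.finitePresentation.comp hψ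
  refine ⟨Q, _, θ, κ, ?_, rfl, ?_⟩
  · exact RingHom.FinitePresentation.of_comp_finiteType _ (hθ ▸ hqψ) (.of_finitePresentation hα)
  · rw [Ideal.map_map, hθ, ← Ideal.map_map]
    exact hρ.of_comp hq.henselEquiv

theorem of_surjective {φ : A →+* H} (h : IsHfp φ I) {p : H →+* B} (hp : Function.Surjective p)
    (hker : (RingHom.ker p).FG) : IsHfp (p.comp φ) I := by
  obtain ⟨S, _, ψ, ρ, hψ, rfl, hρ⟩ := h
  obtain ⟨n, t, ht⟩ := Submodule.fg_iff_exists_fin_generating_family.1 hker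
  obtain ⟨Q, _, q, κ, hq, rfl, y, rfl⟩ :=
    (isHenselization_iff_isHenselizationAway_one.1 hρ).exists_etaleNhd t
  let 𝔞 := Ideal.span (Set.range y)
  have hkerp : RingHom.ker p = (RingHom.ker (Ideal.Quotient.mk 𝔞)).map κ := by
    rw [Ideal.mk_ker, Ideal.map_span, ← Set.range_comp]
    exact ht.symm
  have h𝔞 (x : Q) (hx : x ∈ 𝔞) : (p.comp κ) x = 0 := by
    rw [RingHom.comp_apply, ← RingHom.mem_ker, hkerp, Ideal.mk_ker]
    exact Ideal.mem_map_of_mem κ hx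
  have hκ := (hρ.of_comp hq.henselEquiv).of_surjective (r := Ideal.Quotient.mk 𝔞)
    Ideal.Quotient.mk_surjective hp hkerp (Ideal.Quotient.lift_comp_mk 𝔞 _ h𝔞)
  rw [Ideal.map_map, Ideal.map_map] at hκ
  refine ⟨_, _, _, _, .comp (.of_surjective _ Ideal.Quotient.mk_surjective ?_)
    (hq.finitePresentation.comp hψ), ?_, hκ⟩
  · rw [Ideal.mk_ker]
    exact Submodule.fg_span (Set.finite_range y)
  · rw [← RingHom.comp_assoc, Ideal.Quotient.lift_comp_mk]
    rfl

theorem of_section {φ : A →+* H} (h : IsHfp φ I) {p : H →+* B} {s : B →+* H}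
    (hps : p.comp s = .id B) (hs : (s.comp p).comp φ = φ) : IsHfp (p.comp φ) I := by
  refine h.of_surjective (fun b => ⟨s b, congr($hps b)⟩) ?_
  obtain ⟨S, _, ψ, ρ, hψ, rfl, hρ⟩ := h
  exact hρ.fg_ker (.of_finitePresentation hψ) hps hs

theorem congr {φ : A →+* S} {g : S} {ρ : S →+* H} {ρ' : S →+* B} (h : IsHfp (ρ.comp φ) I)
    (hρ : IsHenselizationAway K g ρ) (hρ' : IsHenselizationAway K g ρ') :
    IsHfp (ρ'.comp φ) I := by
  obtain ⟨e, rfl⟩ := hρ.exists_ringEquiv hρ'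
  refine h.of_surjective (p := e.toRingHom) e.surjective ?_
  rw [(RingHom.injective_iff_ker_eq_bot e.toRingHom).1 e.injective]
  exact Submodule.fg_bot

end IsHfp

theorem span_range_eq_top_of_span_range_mk_eq_top [HenselianRing S K] {ι : Type*} {f : ι → S}
    (h : Ideal.span (Set.range fun i => Ideal.Quotient.mk K (f i)) = ⊤) :
    Ideal.span (Set.range f) = ⊤ := by
  rw [Set.range_comp' (Ideal.Quotient.mk K) f, ← Ideal.map_span, Ideal.eq_top_iff_one,
    Ideal.mem_map_iff_of_surjective _ Ideal.Quotient.mk_surjective] at h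
  obtain ⟨x, hx, hx1⟩ := h
  exact Ideal.eq_top_of_isUnit_mem _ hx (isUnit_of_isUnit_mk K (hx1 ▸ isUnit_one))

theorem FpApproximation.exists_span_eq_top [Algebra A B] {ι : Type*} [Finite ι] {f : ι → B}
    (hf : Ideal.span (Set.range f) = ⊤) : ∃ (X : FpApproximation A B) (g : ι → X.Ring),
      (∀ i, X.eval (g i) = f i) ∧ Ideal.span (Set.range g) = ⊤ := by
  have := Fintype.ofFinite ι
  obtain ⟨a, ha⟩ := Ideal.mem_span_range_iff_exists_fun.1 (hf ▸ Submodule.mem_top (x := (1 : B)))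
  choose Y y hy using fun i => exists_eval_eq (R := A) (f i)
  choose Z z hz using fun i => exists_eval_eq (R := A) (a i)
  obtain ⟨X, hX⟩ := Finite.exists_le Y
  obtain ⟨X', hX'⟩ := Finite.exists_le Z
  obtain ⟨W, hXW, hXW'⟩ := exists_ge_ge X X'
  have heval {X Y : FpApproximation A B} (h : X ≤ Y) (x : X.Ring) : Y.eval (map h x) = X.eval x :=
    congr($(eval_comp_map h) x)
  obtain ⟨V, hWV, hV⟩ := exists_map_eq
    (∑ i, map ((hX' i).trans hXW') (z i) * map ((hX i).trans hXW) (y i)) 1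
    (by simp only [map_sum, map_mul, heval, hy, hz, ha, map_one])
  refine ⟨V, fun i => map (((hX i).trans hXW).trans hWV) (y i), fun i => by rw [heval, hy], ?_⟩
  rw [Ideal.eq_top_iff_one, Ideal.mem_span_range_iff_exists_fun]
  refine ⟨fun i => map hWV (map ((hX' i).trans hXW') (z i)), ?_⟩
  rw [← map_one (map hWV), ← hV, map_sum]
  exact Finset.sum_congr rfl fun i _ => by
    rw [map_mul, ← map_comp_map ((hX i).trans hXW) hWV, AlgHom.comp_apply]

theorem isHfp_henselization {R : CommRingCat.{u}} {K : Ideal R} {X : Under R}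
    (hX : X.hom.hom.FinitePresentation) : IsHfp (henselization K 1 X).hom.hom K := by
  refine ⟨_, _, _, _, hX, rfl, isHenselization_iff_isHenselizationAway_one.2 ?_⟩
  exact map_one X.hom.hom ▸ isHenselizationAway_toHenselization K 1 X

theorem IsHfp.of_comp_eq_id {R : CommRingCat.{u}} {K : Ideal R} {X Y : Under R} {p : X ⟶ Y}
    {s : Y ⟶ X} (hs : s ≫ p = 𝟙 Y) (h : IsHfp X.hom.hom K) : IsHfp Y.hom.hom K := by
  rw [← Under.w p]
  refine h.of_section (s := s.right.hom) congr(($hs).right.hom) ?_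
  exact congr(($(Under.w (p ≫ s))).hom)

theorem IsHfp.of_forall_isHenselizationAway_map {φ : S →+* B} (hB : HenselianRing B (K.map φ))
    {ι : Type*} [Finite ι] {g : ι → S} (hg : Ideal.span (Set.range g) = ⊤) {H : ι → Type u}
    [∀ i, CommRing (H i)] {ρ : ∀ i, B →+* H i}
    (hρ : ∀ i, IsHenselizationAway (K.map φ) (φ (g i)) (ρ i))
    (h : ∀ i, IsHfp ((ρ i).comp φ) K) : IsHfp φ K := by
  algebraize [φ]
  let c := FpApproximation.cocone S B
  obtain ⟨hc⟩ := FpApproximation.nonempty_isColimit_cocone S B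
  have hc₁ : IsHenselianAway (R := .of S) K 1 c.pt := ⟨hB, by simp⟩
  have hfp (i) : IsHfp (henselization (R := .of S) K (g i) c.pt).hom.hom K :=
    (h i).congr (hρ i) (isHenselizationAway_toHenselization (R := .of S) K (g i) c.pt)
  obtain ⟨X, s, hs⟩ := exists_section_of_isHfp hg hc hc₁ hfp
  exact (isHfp_henselization X.finitePresentation_algebraMap).of_comp_eq_id hs

theorem IsHfp.of_forall_isHenselizationAway {φ : A →+* B} (hB : HenselianRing B (I.map φ))
    {ι : Type*} [Finite ι] {f : ι → B} (hf : Ideal.span (Set.range f) = ⊤) {H : ι → Type u}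
    [∀ i, CommRing (H i)] {ρ : ∀ i, B →+* H i}
    (hρ : ∀ i, IsHenselizationAway (I.map φ) (f i) (ρ i))
    (h : ∀ i, IsHfp ((ρ i).comp φ) I) : IsHfp φ I := by
  algebraize [φ]
  obtain ⟨X, g, hXg, hg⟩ := FpApproximation.exists_span_eq_top (A := A) hf
  have hα := X.finitePresentation_algebraMap
  have hφ : X.eval.toRingHom.comp (algebraMap A X.Ring) = φ := X.eval.comp_algebraMap
  rw [← hφ] at hB hρ h ⊢
  rw [← Ideal.map_map] at hB hρ
  refine .comp (φ := X.eval.toRingHom) (.of_forall_isHenselizationAway_map hB hg (ρ := ρ)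
    (fun i => ?_) fun i => ?_) hα
  · exact (hXg i).symm ▸ hρ i
  · exact (h i).of_comp (φ := (ρ i).comp X.eval.toRingHom) hα

theorem isHfp_of_cover_general {A B : Type u} [CommRing A] [CommRing B] [Algebra A B] (I : Ideal A)
    [HenselianRing B (I.map (algebraMap A B))] {ι : Type*} [Finite ι] (f : ι → B)
    (hgen : Ideal.span (Set.range fun i =>
      Ideal.Quotient.mk (I.map (algebraMap A B)) (f i)) = ⊤)
    (Bi : ι → Type u) [∀ i, CommRing (Bi i)] (ρ : ∀ i, Localization.Away (f i) →+* Bi i)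
    (hhens : ∀ i, IsHenselization
      ((I.map (algebraMap A B)).map (algebraMap B (Localization.Away (f i)))) (ρ i))
    (hhfp : ∀ i, IsHfp
      ((ρ i).comp ((algebraMap B (Localization.Away (f i))).comp (algebraMap A B))) I) :
    IsHfp (algebraMap A B) I := by
  refine .of_forall_isHenselizationAway ‹_› (span_range_eq_top_of_span_range_mk_eq_top hgen)
    (ρ := fun i => (ρ i).comp (algebraMap B (Localization.Away (f i)))) (fun i => ?_) hhfp
  have h := isHenselization_iff_isHenselizationAway_one.1 (hhens i)
  exact ⟨Ideal.map_map (I := I.map (algebraMap A B)) _ (ρ i) ▸ h.1,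
    (IsHenselEquivAway.localizationAway _ (f i)).comp h.2⟩

end Hfp

/-- Zariski-locality of hfp: if finitely many `f i : B` generate the unit ideal modulo `I·B`
and each Henselized localization `B_{f i}` is hfp over `A`, then `B` is hfp over `A`. -/
theorem isHfp_of_cover
    {A B : Type u} [CommRing A] [CommRing B] [Algebra A B]
    (I : Ideal A) [HenselianRing A I]
    [HenselianRing B (I.map (algebraMap A B))]
    (n : ℕ) (f : Fin n → B)
    (hgen : Ideal.span (Set.range fun i =>
      Ideal.Quotient.mk (I.map (algebraMap A B)) (f i)) = ⊤)
    (Bi : Fin n → Type u) (instBi : ∀ i, CommRing (Bi i))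
    (ρ : ∀ i, Localization.Away (f i) →+* Bi i)
    (hhens : ∀ i, IsHenselization
      ((I.map (algebraMap A B)).map (algebraMap B (Localization.Away (f i)))) (ρ i))
    (hhfp : ∀ i, IsHfp
      ((ρ i).comp ((algebraMap B (Localization.Away (f i))).comp (algebraMap A B))) I) :
    IsHfp (algebraMap A B) I :=
  isHfp_of_cover_general I f hgen Bi ρ hhens hhfp
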